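/- arXiv:1602.01992 — 6 statements merged into one kernel-verified Lean document; each statement's English description precedes it below -/
import Mathlib

section
/- For every integer k ≥ 1 and every ε > 0 there exists γ = γ(ε,k) > 0 such that the following holds for every finite abelian group G: if M : G^k → G^k is a group homomorphism with M(x,…,x) = 0 for every x ∈ G, S = M^{-1}(0), and A ⊆ G satisfies |A| > ε|G|, then |A^k ∩ S| ≥ γ|S|. -/
open Finset

attribute [local instance] Classical.propDecidable

namespace DHJ

open scoped BigOperators

noncomputable def av {X : Type} [Finite X] (f : X → ℝ) : ℝ :=
  letI := Fintype.ofFinite X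
  (∑ x, f x) / (Nat.card X : ℝ)

section av
variable {X Y Z : Type} [Finite X] [Finite Y] [Finite Z]

lemma av_eq [Fintype X] (f : X → ℝ) : av f = (∑ x, f x) / (Nat.card X : ℝ) := by
  unfold av
  congr!

lemma av_add (f g : X → ℝ) : av (fun x => f x + g x) = av f + av g := by
  let := Fintype.ofFinite X
  simp only [av_eq, Finset.sum_add_distrib, add_div]

lemma av_mul (c : ℝ) (f : X → ℝ) : av (fun x => c * f x) = c * av f := by
  let := Fintype.ofFinite X
  simp only [av_eq, ← Finset.mul_sum, mul_div_assoc]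

lemma av_sub (f g : X → ℝ) : av (fun x => f x - g x) = av f - av g := by
  let := Fintype.ofFinite X
  simp only [av_eq, Finset.sum_sub_distrib, sub_div]

lemma av_const [Nonempty X] (c : ℝ) : av (fun _ : X => c) = c := by
  let := Fintype.ofFinite X
  have : (Nat.card X : ℝ) ≠ 0 := by exact_mod_cast Nat.card_pos.ne'
  simp only [av_eq, Finset.sum_const, Finset.card_univ, nsmul_eq_mul, Nat.card_eq_fintype_card] at *
  field_simp

lemma av_mono {f g : X → ℝ} (h : ∀ x, f x ≤ g x) : av f ≤ av g := by
  let := Fintype.ofFinite X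
  simp only [av_eq]
  gcongr with x
  exact h x

lemma av_nonneg {f : X → ℝ} (h : ∀ x, 0 ≤ f x) : 0 ≤ av f := by
  let := Fintype.ofFinite X
  simp only [av_eq]
  have := Finset.sum_nonneg (fun x (_ : x ∈ Finset.univ) => h x)
  positivity

lemma av_equiv (e : X ≃ Y) (f : Y → ℝ) : av (fun x => f (e x)) = av f := by
  let := Fintype.ofFinite X
  let := Fintype.ofFinite Y
  simp only [av_eq, Nat.card_congr e]
  rw [Equiv.sum_comp e]

lemma av_prod (f : X × Y → ℝ) : av f = av fun x => av fun y => f (x, y) := by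
  let := Fintype.ofFinite X
  let := Fintype.ofFinite Y
  simp only [av_eq, Nat.card_prod, Fintype.sum_prod_type, ← Finset.sum_div]
  push_cast
  rw [div_div, mul_comm]

lemma av_comm (f : X → Y → ℝ) : (av fun x => av fun y => f x y) = av fun y => av fun x => f x y := by
  rw [← av_prod (fun p : X × Y => f p.1 p.2), ← av_prod (fun p : Y × X => f p.2 p.1),
    ← av_equiv (Equiv.prodComm X Y)]
  rfl

lemma av_fsum {ι : Type} (s : Finset ι) (f : ι → X → ℝ) :
    av (fun x => ∑ i ∈ s, f i x) = ∑ i ∈ s, av (f i) := by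
  let := Fintype.ofFinite X
  simp only [av_eq, ← Finset.sum_div]
  rw [Finset.sum_comm]

lemma exists_av_le [Nonempty X] (f : X → ℝ) : ∃ x, av f ≤ f x := by
  by_contra! h
  let := Fintype.ofFinite X
  have hc : (0 : ℝ) < (Nat.card X : ℝ) := by exact_mod_cast Nat.card_pos
  have h2 : ∑ x, f x < ∑ x : X, av f := Finset.sum_lt_sum_of_nonempty Finset.univ_nonempty
    (fun x _ => h x)
  rw [Finset.sum_const, Finset.card_univ, nsmul_eq_mul, av_eq, ← Nat.card_eq_fintype_card] at h2
  rw [mul_div_cancel₀ _ hc.ne'] at h2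
  exact lt_irrefl _ h2

lemma av_indicator_range (F : Z → X) (hF : Function.Injective F) (w : X → ℝ) [Nonempty Z] :
    av ((Set.range F).indicator w) = (Nat.card Z / Nat.card X : ℝ) * av (fun z => w (F z)) := by
  let := Fintype.ofFinite X
  let := Fintype.ofFinite Z
  have hc : (Nat.card Z : ℝ) ≠ 0 := by exact_mod_cast Nat.card_pos.ne'
  have : ∑ x, (Set.range F).indicator w x = ∑ z, w (F z) := by
    rw [← Finset.sum_image (s := Finset.univ) (g := F) (f := w) (by intro a _ b _ h; exact hF h)]
    rw [← Finset.sum_indicator_subset w (Finset.subset_univ _)]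
    congr! 2
    ext; simp
  simp only [av_eq, this]
  field_simp

noncomputable def mu (A : Set X) : ℝ := av (A.indicator (fun _ => (1:ℝ)))

lemma mu_nonneg (A : Set X) : 0 ≤ mu A :=
  av_nonneg fun x => Set.indicator_nonneg (by simp) x

lemma mu_mono {A B : Set X} (h : A ⊆ B) : mu A ≤ mu B :=
  av_mono fun x => Set.indicator_le_indicator_of_subset h (fun _ => zero_le_one) x

lemma mu_univ [Nonempty X] : mu (Set.univ : Set X) = 1 := by
  simp [mu, av_const]

lemma mu_le_one (A : Set X) : mu A ≤ 1 := by
  rcases isEmpty_or_nonempty X with h | h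
  · simp [mu, av]
  · rw [← mu_univ (X := X)]; exact mu_mono (Set.subset_univ _)

lemma mu_union {A B : Set X} (h : Disjoint A B) : mu (A ∪ B) = mu A + mu B := by
  rw [mu, Set.indicator_union_of_disjoint h, av_add]; rfl

lemma mu_diff {A B : Set X} (h : B ⊆ A) : mu (A \ B) = mu A - mu B := by
  have := mu_union (X := X) (A := A \ B) (B := B) Set.disjoint_sdiff_left
  rw [Set.sdiff_union_of_subset h] at this
  linarith

lemma mu_equiv (e : X ≃ Y) (A : Set Y) : mu (e ⁻¹' A) = mu A := by
  rw [mu, mu, ← av_equiv e]; rfl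

lemma mu_prod (A : Set (X × Y)) : mu A = av fun x => mu {y | (x, y) ∈ A} := by
  rw [mu, av_prod]; rfl

lemma mu_prod' (A : Set (X × Y)) : mu A = av fun y => mu {x | (x, y) ∈ A} := by
  rw [mu, av_prod, av_comm]; rfl

/-- Varnavides-type pigeonhole. -/
lemma pigeon [Nonempty Y] {Λ : Type} [Finite Λ] (L : Λ → Set X) (δ : ℝ) (hδ : 0 < δ)
    (R : Set (X × Y)) (hR : δ ≤ mu R)
    (h : ∀ S : Set X, δ / 2 ≤ mu S → ∃ l, L l ⊆ S) :
    ∃ l, δ / (2 * (Nat.card Λ + 1)) ≤ mu {y : Y | ∀ x ∈ L l, (x, y) ∈ R} := by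
  let := Fintype.ofFinite Λ
  have key : ∀ y : Y, mu {x | (x, y) ∈ R} ≤ δ / 2 +
      ∑ l, ({y : Y | ∀ x ∈ L l, (x, y) ∈ R}).indicator (fun _ => (1:ℝ)) y := by
    intro y
    have hnn : ∀ l ∈ (Finset.univ : Finset Λ),
        0 ≤ ({y : Y | ∀ x ∈ L l, (x, y) ∈ R}).indicator (fun _ => (1:ℝ)) y :=
      fun l _ => Set.indicator_nonneg (by simp) y
    by_cases hy : δ / 2 ≤ mu {x | (x, y) ∈ R}
    · obtain ⟨l, hl⟩ := h _ hy
      have h1 := Finset.single_le_sum hnn (Finset.mem_univ l)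
      have : y ∈ {y : Y | ∀ x ∈ L l, (x, y) ∈ R} := fun x hx => hl hx
      rw [Set.indicator_of_mem this] at h1
      have := mu_le_one {x | (x, y) ∈ R}
      linarith
    · have := Finset.sum_nonneg hnn
      linarith
  have h1 := av_mono key
  rw [← mu_prod', av_add, av_const, av_fsum] at h1
  have h2 : δ / 2 ≤ ∑ l, mu {y : Y | ∀ x ∈ L l, (x, y) ∈ R} := by
    have : δ ≤ δ / 2 + ∑ l, mu {y : Y | ∀ x ∈ L l, (x, y) ∈ R} := hR.trans h1
    linarith
  by_contra! hcon
  rcases isEmpty_or_nonempty Λ with hE | hE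
  · simp at h2; linarith
  · have h3 : ∑ l, mu {y : Y | ∀ x ∈ L l, (x, y) ∈ R} < ∑ l : Λ, δ / (2 * (Nat.card Λ + 1)) :=
      Finset.sum_lt_sum_of_nonempty Finset.univ_nonempty (fun x _ => hcon x)
    rw [Finset.sum_const, Finset.card_univ, nsmul_eq_mul, ← Nat.card_eq_fintype_card] at h3
    have hc : (0 : ℝ) < (Nat.card Λ : ℝ) := by exact_mod_cast Nat.card_pos
    have : (Nat.card Λ : ℝ) * (δ / (2 * (Nat.card Λ + 1))) ≤ δ / 2 := by
      rw [← mul_div_assoc, div_le_div_iff₀ (by positivity) (by positivity)]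
      nlinarith
    linarith

end av

end DHJ

namespace DHJ

def IsSub {α η ι : Type} (F : (η → α) → (ι → α)) : Prop :=
  ∃ f : ι → α ⊕ η, (∀ e, ∃ i, f i = Sum.inr e) ∧ ∀ x i, F x i = Sum.elim id x (f i)

section sub
variable {α η ι κ J K : Type}

lemma IsSub.comp {F : (η → α) → (ι → α)} {G : (ι → α) → (κ → α)} (hG : IsSub G) (hF : IsSub F) :
    IsSub (fun x => G (F x)) := by
  obtain ⟨f, hf, hF⟩ := hF
  obtain ⟨g, hg, hG⟩ := hG
  refine ⟨fun i => Sum.elim Sum.inl f (g i), fun e => ?_, fun x i => ?_⟩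
  · obtain ⟨j, hj⟩ := hf e
    obtain ⟨i, hi⟩ := hg j
    exact ⟨i, by simp [hi, hj]⟩
  · simp only [hG]
    rcases g i with a | j
    · simp
    · simp [hF]

lemma IsSub.inj {F : (η → α) → (ι → α)} (hF : IsSub F) : Function.Injective F := by
  obtain ⟨f, hf, hF⟩ := hF
  intro x y h
  ext e
  obtain ⟨i, hi⟩ := hf e
  have := congrFun h i
  simpa [hF, hi] using this

lemma isSub_left (y : K → α) : IsSub (fun x : J → α => (Sum.elim x y : J ⊕ K → α)) :=
  ⟨Sum.elim Sum.inr (fun k => Sum.inl (y k)), fun e => ⟨Sum.inl e, rfl⟩, by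
    rintro x (i | i) <;> rfl⟩

lemma isSub_right (x : J → α) : IsSub (fun y : K → α => (Sum.elim x y : J ⊕ K → α)) :=
  ⟨Sum.elim (fun k => Sum.inl (x k)) Sum.inr, fun e => ⟨Sum.inr e, rfl⟩, by
    rintro x (i | i) <;> rfl⟩

lemma isSub_reindex (e : ι ≃ κ) : IsSub (fun x : κ → α => fun i => x (e i)) :=
  ⟨fun i => Sum.inr (e i), fun k => ⟨e.symm k, by simp⟩, fun _ _ => rfl⟩

lemma isSub_prod {η' : Type} {F : (η → α) → (J → α)} {G : (η' → α) → (K → α)}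
    (hF : IsSub F) (hG : IsSub G) :
    IsSub (fun x : η ⊕ η' → α =>
      (Sum.elim (F fun i => x (Sum.inl i)) (G fun i => x (Sum.inr i)) : J ⊕ K → α)) := by
  obtain ⟨f, hf, hF⟩ := hF
  obtain ⟨g, hg, hG⟩ := hG
  refine ⟨Sum.elim (fun j => (f j).map id Sum.inl) (fun j => (g j).map id Sum.inr), ?_, ?_⟩
  · rintro (e | e)
    · obtain ⟨i, hi⟩ := hf e
      exact ⟨Sum.inl i, by simp [hi]⟩
    · obtain ⟨i, hi⟩ := hg e
      exact ⟨Sum.inr i, by simp [hi]⟩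
  · rintro x (i | i)
    · simp only [Sum.elim_inl, hF]
      rcases f i with a | a <;> simp
    · simp only [Sum.elim_inr, hG]
      rcases g i with a | a <;> simp

lemma exists_split [Finite ι] (N : ℕ) (h : N ≤ Nat.card ι) :
    Nonempty (ι ≃ Fin N ⊕ Fin (Nat.card ι - N)) := by
  have e1 := Finite.equivFin ι
  exact ⟨e1.trans ((finCongr (by omega)).trans finSumFinEquiv.symm)⟩

lemma mu_sum [Finite J] [Finite K] [Finite α] (A : Set (J ⊕ K → α)) :
    mu {p : (J → α) × (K → α) | (Sum.elim p.1 p.2 : J ⊕ K → α) ∈ A} = mu A := by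
  rw [← mu_equiv (Equiv.sumArrowEquivProdArrow J K α).symm A]
  rfl

lemma mu_reindex [Finite ι] [Finite κ] [Finite α] (e : ι ≃ κ) (A : Set (ι → α)) :
    mu {x : κ → α | (fun i => x (e i)) ∈ A} = mu A := by
  rw [← mu_equiv (Equiv.arrowCongr e.symm (Equiv.refl α)) A]
  rfl

def LineFree (A : Set (ι → α)) : Prop :=
  ∀ F : (Unit → α) → (ι → α), IsSub F → ∃ x, F x ∉ A

lemma LineFree.comap {A : Set (ι → α)} (hA : LineFree A) {F : (η → α) → (ι → α)} (hF : IsSub F) :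
    LineFree {x | F x ∈ A} := fun _ hG => hA _ (hF.comp hG)

def Dhj (α : Type) [Finite α] : Prop := ∀ δ : ℝ, 0 < δ → ∃ N : ℕ, ∀ (ι : Type) [Finite ι],
  N ≤ Nat.card ι → ∀ A : Set (ι → α), δ ≤ mu A → ¬ LineFree A

def Mdhj (α : Type) [Finite α] (m : ℕ) : Prop := ∀ δ : ℝ, 0 < δ → ∃ N : ℕ, ∀ (ι : Type) [Finite ι],
  N ≤ Nat.card ι → ∀ A : Set (ι → α), δ ≤ mu A →
    ∃ F : (Fin m → α) → (ι → α), IsSub F ∧ ∀ x, F x ∈ A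

lemma mdhj_of_dhj (α : Type) [Finite α] [Nonempty α] (h : Dhj α) (m : ℕ) : Mdhj α m := by
  induction m with
  | zero =>
    intro δ hδ
    refine ⟨0, fun ι _ _ A hA => ?_⟩
    have : ∃ x, x ∈ A := by
      by_contra! hx
      have : A = ∅ := Set.eq_empty_of_forall_notMem hx
      subst this
      have : mu (∅ : Set (ι → α)) = 0 := by simp [mu, av_const]
      linarith
    obtain ⟨x, hx⟩ := this
    exact ⟨fun _ => x, ⟨fun i => Sum.inl (x i), fun e => e.elim0, fun _ _ => rfl⟩, fun _ => hx⟩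
  | succ m ih =>
    intro δ hδ
    obtain ⟨N1, hN1⟩ := h (δ / 2) (by positivity)
    let Λ := {F : (Unit → α) → (Fin N1 → α) // IsSub F}
    obtain ⟨N2, hN2⟩ := ih (δ / (2 * (Nat.card Λ + 1))) (by positivity)
    refine ⟨N1 + N2, fun ι _ hι A hA => ?_⟩
    obtain ⟨e⟩ := exists_split (ι := ι) N1 (by omega)
    set K := Fin (Nat.card ι - N1)
    have hK : N2 ≤ Nat.card K := by simp [K]; omega
    let A' : Set ((Fin N1 ⊕ K) → α) := {x | (fun i => x (e i)) ∈ A}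
    have hA' : mu A' = mu A := mu_reindex e A
    rw [← hA', ← mu_sum] at hA
    obtain ⟨⟨F, hF⟩, hl⟩ := pigeon (Λ := Λ) (fun l => Set.range l.1) δ hδ _ hA (by
      intro S hS
      have := hN1 (Fin N1) (by simp) S hS
      unfold LineFree at this
      push Not at this
      obtain ⟨F, hF, h2⟩ := this
      exact ⟨⟨F, hF⟩, by rintro _ ⟨x, rfl⟩; exact h2 x⟩)
    obtain ⟨G, hG, hG2⟩ := hN2 K hK _ hl
    let e2 : Unit ⊕ Fin m ≃ Fin (m + 1) := (Equiv.sumComm _ _).trans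
      ((Equiv.optionEquivSumPUnit _).symm.trans (finSuccEquiv m).symm)
    refine ⟨_, ((isSub_reindex e).comp (isSub_prod hF hG)).comp (isSub_reindex e2), fun x => ?_⟩
    exact hG2 (fun i => x (e2 (Sum.inr i))) _ ⟨fun i => x (e2 (Sum.inl i)), rfl⟩

end sub
end DHJ

namespace DHJ

def IsSubA {α η ι : Type} (F : (η → Option α) → (ι → Option α)) : Prop :=
  ∃ f : ι → α ⊕ η, (∀ e, ∃ i, f i = Sum.inr e) ∧ ∀ x i, F x i = Sum.elim some x (f i)

section gr
variable {α η ι κ J K : Type}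

lemma IsSubA.isSub {F : (η → Option α) → (ι → Option α)} (h : IsSubA F) : IsSub F := by
  obtain ⟨f, hf, hF⟩ := h
  refine ⟨fun i => (f i).map some id, fun e => ?_, fun x i => ?_⟩
  · obtain ⟨i, hi⟩ := hf e
    exact ⟨i, by simp [hi]⟩
  · simp only [hF]
    rcases f i with a | a <;> simp

lemma IsSubA.comp {F : (η → Option α) → (ι → Option α)} {G : (ι → Option α) → (κ → Option α)}
    (hG : IsSubA G) (hF : IsSubA F) : IsSubA (fun x => G (F x)) := by
  obtain ⟨f, hf, hF⟩ := hF
  obtain ⟨g, hg, hG⟩ := hG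
  refine ⟨fun i => Sum.elim Sum.inl f (g i), fun e => ?_, fun x i => ?_⟩
  · obtain ⟨j, hj⟩ := hf e
    obtain ⟨i, hi⟩ := hg j
    exact ⟨i, by simp [hi, hj]⟩
  · simp only [hG]
    rcases g i with a | j
    · simp
    · simp [hF]

def oe {β : Type} (b : β) (x : η → β) : Option η → β := fun o => o.elim b x

lemma isSub_oe {β : Type} (b : β) : IsSub (fun x : η → β => oe b x) :=
  ⟨fun o => o.elim (Sum.inl b) Sum.inr, fun e => ⟨some e, rfl⟩, by
    rintro x (_ | i) <;> rfl⟩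

lemma IsSubA.ext {F : (η → Option α) → (ι → Option α)} (hF : IsSubA F) :
    IsSubA (fun z : Option η → Option α => oe (z none) (F fun i => z (some i))) := by
  obtain ⟨f, hf, hF⟩ := hF
  refine ⟨fun o => o.elim (Sum.inr none) (fun i => (f i).map id some), ?_, ?_⟩
  · rintro (_ | e)
    · exact ⟨none, rfl⟩
    · obtain ⟨i, hi⟩ := hf e
      exact ⟨some i, by simp [hi]⟩
  · rintro x (_ | i)
    · rfl
    · simp only [oe, Option.elim, hF]
      rcases f i with a | a <;> simp

theorem gr (α : Type) [Finite α] [Nonempty α] (m r : ℕ) : ∀ (P : Type) [Finite P],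
    ∃ (J : Type) (_ : Finite J), ∀ good : (J → Option α) → P → Prop,
      (∃ p, ∃ V : (Fin m → Option α) → (J → Option α), IsSub V ∧ ∀ x, good (V x) p) ∨
      (∃ (η : Type) (_ : Finite η), Nat.card η = r ∧
        ∃ W : (η → Option α) → (J → Option α), IsSubA W ∧
          ∀ l, (∃ j, l j = none) → ∀ p, ¬ good (W l) p) := by
  induction r with
  | zero =>
    intro P _
    refine ⟨Empty, inferInstance, fun good => Or.inr ⟨Empty, inferInstance, by simp, id,
      ⟨Sum.inr, fun e => e.elim, fun x i => i.elim⟩, ?_⟩⟩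
    rintro l ⟨j, _⟩
    exact j.elim
  | succ r ih =>
    intro P _
    obtain ⟨J', hJ', ih⟩ := ih (α × P)
    obtain ⟨H, hH, hj⟩ := Combinatorics.Subspace.exists_mono_in_high_dimension
      (Option α) (P → Prop) (J' ⊕ Fin m)
    refine ⟨H ⊕ Unit, inferInstance, fun good => ?_⟩
    obtain ⟨l, c, hc⟩ := hj (fun x p => good (Sum.elim x (fun _ => none)) p)
    by_cases hcp : ∃ p, c p
    · obtain ⟨p, hp⟩ := hcp
      left
      refine ⟨p, fun z => Sum.elim (l (Sum.elim (fun _ => none) z)) (fun _ => none), ?_, ?_⟩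
      · exact (isSub_left (fun _ => none)).comp
          ((show IsSub (fun x => l x) from ⟨l.idxFun, l.proper, fun _ _ => rfl⟩).comp
            (isSub_right (fun _ => none)))
      · intro x
        have := congrFun (hc (Sum.elim (fun _ => none) x)) p
        simp only at this
        rw [this]; exact hp
    · push Not at hcp
      obtain ⟨a0⟩ := ‹Nonempty α›
      let u : H ⊕ Unit → α ⊕ Option J' := Sum.elim
        (fun h => match l.idxFun h with
          | Sum.inl none => Sum.inr none
          | Sum.inl (some a) => Sum.inl a
          | Sum.inr (Sum.inl j) => Sum.inr (some j)
          | Sum.inr (Sum.inr _) => Sum.inl a0) (fun _ => Sum.inr none)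
      let U : (Option J' → Option α) → (H ⊕ Unit → Option α) := fun z i => Sum.elim some z (u i)
      have hU : IsSubA U := by
        refine ⟨u, ?_, fun _ _ => rfl⟩
        rintro (_ | j)
        · exact ⟨Sum.inr (), rfl⟩
        · obtain ⟨i, hi⟩ := l.proper (Sum.inl j)
          exact ⟨Sum.inl i, by simp [u, hi]⟩
      have hUn : ∀ z, z none = none → U z =
          Sum.elim (l (Sum.elim (fun j => z (some j)) (fun _ => some a0))) (fun _ => none) := by
        intro z hz
        ext1 i
        rcases i with i | i
        · simp only [U, u, Sum.elim_inl, Combinatorics.Subspace.coe_apply]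
          rcases l.idxFun i with (_ | a) | (j | j) <;> simp [hz]
        · simp [U, u, hz]
      rcases ih (fun x ap => good (U (oe (some ap.1) x)) ap.2) with ⟨⟨a, p⟩, V, hV, hg⟩ | h
      · left
        exact ⟨p, _, hU.isSub.comp ((isSub_oe (some a)).comp hV), hg⟩
      · right
        obtain ⟨η, hη, hcard, W, hW, hb⟩ := h
        refine ⟨Option η, inferInstance, by simp [hcard], _, hU.comp hW.ext, ?_⟩
        intro z hz p
        rcases hzn : z none with _ | a
        · rw [hUn _ (by rfl)]
          have := congrFun (hc (Sum.elim (fun j => W (fun i => z (some i)) j) (fun _ => some a0))) p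
          simp only at this
          intro h
          refine hcp p ?_
          rw [← this]
          exact h
        · refine hb (fun i => z (some i)) ?_ (a, p)
          obtain ⟨j, hj⟩ := hz
          rcases j with _ | j
          · simp [hzn] at hj
          · exact ⟨j, hj⟩

end gr
end DHJ

namespace DHJ

section tiled
variable {β η ι κ J K : Type}

inductive Tiled (M : ℕ) : Set (ι → β) → Prop
  | empty : Tiled M ∅
  | add (F : (Fin M → β) → (ι → β)) (S : Set (ι → β)) (hF : IsSub F)
      (hd : Disjoint (Set.range F) S) (hS : Tiled M S) : Tiled M (Set.range F ∪ S)

lemma Tiled.range {M : ℕ} {F : (Fin M → β) → (ι → β)} (hF : IsSub F) : Tiled M (Set.range F) := by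
  have := Tiled.add F ∅ hF (by simp) Tiled.empty
  simpa using this

lemma Tiled.union {M : ℕ} {S T : Set (ι → β)} (hS : Tiled M S) (hT : Tiled M T)
    (h : Disjoint S T) : Tiled M (S ∪ T) := by
  induction hS with
  | empty => simpa using hT
  | add F S hF hd hS ih =>
    rw [Set.disjoint_union_left] at h
    rw [Set.union_assoc]
    exact Tiled.add F _ hF (Set.disjoint_union_right.2 ⟨hd, h.1⟩) (ih h.2)

lemma Tiled.image {M : ℕ} {S : Set (ι → β)} (hS : Tiled M S) {G : (ι → β) → (κ → β)}
    (hG : IsSub G) : Tiled M (G '' S) := by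
  induction hS with
  | empty => simpa using Tiled.empty
  | add F S hF hd hS ih =>
    rw [Set.image_union]
    have : G '' Set.range F = Set.range (fun x => G (F x)) := by
      ext; simp
    rw [this]
    refine Tiled.add _ _ (hG.comp hF) ?_ ih
    rw [← this]
    exact (Set.disjoint_image_iff hG.inj).2 hd

lemma Tiled.iUnion {M : ℕ} {X : Type} [Finite X] {S : X → Set (ι → β)} (hS : ∀ x, Tiled M (S x))
    (h : ∀ x y, x ≠ y → Disjoint (S x) (S y)) : Tiled M (⋃ x, S x) := by
  let := Fintype.ofFinite X
  have key : ∀ s : Finset X, Tiled M (⋃ x ∈ s, S x) := by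
    intro s
    induction s using Finset.induction_on with
    | empty => simpa using Tiled.empty
    | insert a s ha ih =>
      rw [Finset.set_biUnion_insert]
      refine (hS a).union ih ?_
      rw [Set.disjoint_iUnion₂_right]
      intro x hx
      exact h a x (by rintro rfl; exact ha hx)
  have := key Finset.univ
  simpa using this

lemma Tiled.av_le [Finite ι] [Finite β] [Nonempty β] {M : ℕ} {S : Set (ι → β)} (hS : Tiled M S)
    (w : (ι → β) → ℝ)
    (hw : ∀ F : (Fin M → β) → (ι → β), IsSub F → av (fun z => w (F z)) ≤ 0) :
    av (S.indicator w) ≤ 0 := by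
  induction hS with
  | empty => simp [av_const]
  | add F S hF hd hS ih =>
    rw [Set.indicator_union_of_disjoint hd, av_add, av_indicator_range F hF.inj]
    have := hw F hF
    have : (Nat.card (Fin M → β) / Nat.card (ι → β) : ℝ) * av (fun z => w (F z)) ≤ 0 :=
      mul_nonpos_of_nonneg_of_nonpos (by positivity) this
    linarith

end tiled

section ins
variable {α η ι κ J K : Type}

def sb (i : α) (x : ι → Option α) : ι → α := fun j => (x j).getD i

def Ins (i : α) (E : Set (ι → Option α)) : Prop :=
  ∀ x x', sb i x = sb i x' → x ∈ E → x' ∈ E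

lemma sb_sub (i : α) {F : (η → Option α) → (ι → Option α)} (hF : IsSub F) {x x'}
    (h : sb i x = sb i x') : sb i (F x) = sb i (F x') := by
  obtain ⟨f, hf, hF⟩ := hF
  ext j
  simp only [sb, hF]
  rcases f j with a | e
  · rfl
  · exact congrFun h e

lemma Ins.comap {i : α} {E : Set (ι → Option α)} (hE : Ins i E)
    {F : (η → Option α) → (ι → Option α)} (hF : IsSub F) : Ins i {x | F x ∈ E} :=
  fun _ _ h hx => hE _ _ (sb_sub i hF h) hx

lemma av_pi {X : Type} [Finite ι] [Finite X] (w : X → ℝ) [Fintype ι] :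
    av (fun x : ι → X => ∏ j, w (x j)) = (av w) ^ (Nat.card ι) := by
  let := Fintype.ofFinite X
  rw [av_eq, av_eq, div_pow]
  congr 1
  · rw [← Fintype.piFinset_univ, ← Finset.prod_univ_sum]
    simp [Finset.card_univ]
  · simp [Nat.card_fun]

lemma tail [Finite α] [Nonempty α] [Finite ι] (N : ℕ) :
    mu {x : ι → Option α | Nat.card {j // x j ≠ none} < N} ≤ 2 ^ N * (3 / 4 : ℝ) ^ (Nat.card ι) := by
  let := Fintype.ofFinite ι
  let := Fintype.ofFinite α
  let w : Option α → ℝ := fun o => if o = none then 1 else 1 / 2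
  have hw : av w ≤ 3 / 4 := by
    rw [av_eq, Fintype.sum_option]
    have hk : (1 : ℝ) ≤ Fintype.card α := by exact_mod_cast Fintype.card_pos
    simp only [w, Nat.card_eq_fintype_card, Fintype.card_option]
    simp
    rw [div_le_div_iff₀ (by positivity) (by positivity)]
    nlinarith
  have hw0 : 0 ≤ av w := av_nonneg fun x => by simp only [w]; split_ifs <;> norm_num
  calc _ ≤ av (fun x : ι → Option α => 2 ^ N * ∏ j, w (x j)) := by
        refine av_mono fun x => ?_
        have hp : ∏ j, w (x j) = (1 / 2 : ℝ) ^ (Nat.card {j // x j ≠ none}) := by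
          simp only [w]
          rw [Finset.prod_ite]
          simp [Nat.card_eq_fintype_card, Fintype.card_subtype]
        rw [hp]
        by_cases hx : x ∈ {x : ι → Option α | Nat.card {j // x j ≠ none} < N}
        · rw [Set.indicator_of_mem hx]
          have hx : Nat.card {j // x j ≠ none} ≤ N := le_of_lt hx
          have h2 : (1 / 2 : ℝ) ^ N ≤ (1 / 2 : ℝ) ^ (Nat.card {j // x j ≠ none}) :=
            pow_le_pow_of_le_one (by norm_num) (by norm_num) hx
          calc (1 : ℝ) = 2 ^ N * (1 / 2) ^ N := by rw [← mul_pow]; norm_num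
            _ ≤ _ := by gcongr
        · rw [Set.indicator_of_notMem hx]; positivity
    _ = 2 ^ N * (av w) ^ (Nat.card ι) := by rw [av_mul, av_pi]
    _ ≤ _ := by gcongr

lemma coupling [Finite α] [Finite ι] [Nonempty α] (f : (ι → Option α) → ℝ) :
    (av fun x : ι → Option α => av fun t : ι → α => f (fun j => (x j).map (fun _ => t j))) = av f := by
  let e : (ι → Option α) × (ι → α) → (ι → Option α) × (ι → α) := fun p =>
    (fun j => (p.1 j).map (fun _ => p.2 j), fun j => (p.1 j).getD (p.2 j))
  have he : Function.Involutive e := by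
    rintro ⟨x, t⟩
    simp only [e, Prod.mk.injEq]
    constructor <;> ext1 j <;> rcases x j with _ | a <;> simp
  have := av_equiv he.toPerm (fun p => f p.1)
  rw [av_prod, av_prod] at this
  simp only [av_const] at this
  exact this

theorem insSub [Finite α] [Nonempty α] (M : ℕ) (h : Mdhj α M) (i : α) (β : ℝ) (hβ : 0 < β) :
    ∃ N : ℕ, ∀ (ι : Type) [Finite ι], N ≤ Nat.card ι → ∀ E : Set (ι → Option α), Ins i E → β ≤ mu E →
      ∃ F : (Fin M → Option α) → (ι → Option α), IsSub F ∧ ∀ x, F x ∈ E := by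
  obtain ⟨N0, hN0⟩ := h (β / 2) (by positivity)
  obtain ⟨N, hN⟩ := exists_pow_lt_of_lt_one (show (0:ℝ) < β / 2 / 2 ^ N0 by positivity)
    (show (3 / 4 : ℝ) < 1 by norm_num)
  refine ⟨N, fun ι _ hι E hE hmu => ?_⟩
  have htail : mu {x : ι → Option α | Nat.card {j // x j ≠ none} < N0} < β / 2 := by
    refine (tail N0).trans_lt ?_
    have : (3 / 4 : ℝ) ^ (Nat.card ι) ≤ (3 / 4) ^ N :=
      pow_le_pow_of_le_one (by norm_num) (by norm_num) hι
    rw [lt_div_iff₀ (by positivity)] at hN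
    nlinarith [show (0:ℝ) < 2 ^ N0 by positivity]
  have hex : ∃ x : ι → Option α, N0 ≤ Nat.card {j // x j ≠ none} ∧
      β / 2 ≤ mu {t : ι → α | (fun j => (x j).map (fun _ => t j)) ∈ E} := by
    by_contra! hcon
    have h1 : mu E ≤ av (fun x : ι → Option α => β / 2 +
      ({x : ι → Option α | Nat.card {j // x j ≠ none} < N0}).indicator (fun _ => (1:ℝ)) x) := by
      rw [mu, ← coupling]
      refine av_mono fun x => ?_
      by_cases hx : Nat.card {j // x j ≠ none} < N0
      · rw [Set.indicator_of_mem (by exact hx)]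
        have := mu_le_one {t : ι → α | (fun j => (x j).map (fun _ => t j)) ∈ E}
        have h2 : mu {t : ι → α | (fun j => (x j).map (fun _ => t j)) ∈ E} ≤ β / 2 + 1 := by linarith
        exact h2
      · rw [Set.indicator_of_notMem (by exact hx)]
        have := hcon x (by omega)
        have h2 : mu {t : ι → α | (fun j => (x j).map (fun _ => t j)) ∈ E} ≤ β / 2 + 0 := by linarith
        exact h2
    rw [av_add, av_const] at h1
    have h2 : mu E ≤ β / 2 + mu {x : ι → Option α | Nat.card {j // x j ≠ none} < N0} := h1
    linarith
  obtain ⟨x, hx, hmx⟩ := hex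
  let p : ι → Prop := fun j => x j ≠ none
  let e : ι ≃ {j // p j} ⊕ {j // ¬ p j} := (Equiv.sumCompl p).symm
  rw [← mu_reindex e, ← mu_sum, mu_prod'] at hmx
  obtain ⟨v, hv⟩ := exists_av_le (fun y => mu {x_1 : {j // p j} → α | (x_1, y) ∈
    {p_1 : ({j // p j} → α) × ({j // ¬ p j} → α) | Sum.elim p_1.1 p_1.2 ∈
      {x_2 : {j // p j} ⊕ {j // ¬ p j} → α | (fun i => x_2 (e i)) ∈ {t : ι → α | (fun j => (x j).map (fun _ => t j)) ∈ E}}}})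
  obtain ⟨F, hF, hFE⟩ := hN0 _ hx _ (hmx.trans hv)
  obtain ⟨f, hf, hF⟩ := hF
  refine ⟨fun z j => Sum.elim (fun r => Sum.elim some z (f r)) (fun _ => none) (e j),
    ⟨fun j => Sum.elim (fun r => (f r).map some id) (fun _ => Sum.inl none) (e j), ?_, ?_⟩, ?_⟩
  · intro k
    obtain ⟨r, hr⟩ := hf k
    exact ⟨e.symm (Sum.inl r), by simp [hr]⟩
  · intro z j
    dsimp only
    rcases e j with r | r
    · simp only [Sum.elim_inl]
      rcases f r with a | a <;> simp
    · simp
  · intro z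
    refine hE _ _ ?_ (hFE (sb i z))
    ext1 j
    simp only [sb]
    by_cases hj : p j
    · have : e j = Sum.inl ⟨j, hj⟩ := Equiv.sumCompl_symm_apply_of_pos hj
      simp only [this, Sum.elim_inl, hF]
      obtain ⟨a, ha⟩ := Option.ne_none_iff_exists'.1 hj
      simp only [ha, Option.map_some]
      rcases f ⟨j, hj⟩ with a | a <;> simp [sb]
    · have : e j = Sum.inr ⟨j, hj⟩ := Equiv.sumCompl_symm_apply_of_neg hj
      simp only [this, Sum.elim_inr]
      have : x j = none := by simpa [p] using hj
      simp [this]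

end ins
end DHJ

namespace DHJ
section tile
variable {α : Type}

lemma isSub_bij_image {β ι κ : Type} (e : ι ≃ κ) (S : Set (κ → β)) :
    (fun x : κ → β => fun i => x (e i)) '' S = {x | (fun k => x (e.symm k)) ∈ S} := by
  ext x
  constructor
  · rintro ⟨y, hy, rfl⟩
    simpa using hy
  · intro hx
    exact ⟨_, hx, by simp⟩

theorem tileStep [Finite α] [Nonempty α] (M : ℕ) (h : Mdhj α M) (i : α) (β : ℝ) (hβ : 0 < β) :
    ∃ c : ℝ, 0 < c ∧ ∀ j : ℕ, ∃ N : ℕ, ∀ (ι : Type) [Finite ι], N ≤ Nat.card ι →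
      ∀ E : Set (ι → Option α), Ins i E →
        ∃ S ⊆ E, Tiled M S ∧ mu (E \ S) ≤ max β (1 - j * (c * (β / 2))) := by
  obtain ⟨N0, hN0⟩ := insSub M h i (β / 2) (by positivity)
  let c : ℝ := Nat.card (Fin M → Option α) / Nat.card (Fin N0 → Option α)
  have hc : 0 < c := by
    have h1 : 0 < Nat.card (Fin M → Option α) := Nat.card_pos
    have h2 : 0 < Nat.card (Fin N0 → Option α) := Nat.card_pos
    positivity
  refine ⟨c, hc, fun j => ?_⟩
  induction j with
  | zero =>
    refine ⟨0, fun ι _ _ E _ => ⟨∅, by simp, Tiled.empty, ?_⟩⟩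
    refine le_max_of_le_right ?_
    simpa using mu_le_one E
  | succ j ih =>
    obtain ⟨N, hN⟩ := ih
    refine ⟨N0 + N, fun ι _ hι E0 hE0 => ?_⟩
    obtain ⟨e⟩ := exists_split (ι := ι) N0 (by omega)
    set K := Fin (Nat.card ι - N0)
    have hK : N ≤ Nat.card K := by simp [K]; omega
    -- reduce to the sum type
    suffices hs : ∀ E : Set (Fin N0 ⊕ K → Option α), Ins i E →
        ∃ S ⊆ E, Tiled M S ∧ mu (E \ S) ≤ max β (1 - (j + 1 : ℕ) * (c * (β / 2))) by
      obtain ⟨S, hSE, hST, hSm⟩ := hs _ (hE0.comap (isSub_reindex e))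
      refine ⟨_, ?_, hST.image (isSub_reindex e), ?_⟩
      · rintro _ ⟨x, hx, rfl⟩
        exact hSE hx
      · rw [isSub_bij_image, ← mu_reindex e]
        convert hSm using 2
        ext x
        simp
    intro E hE
    choose! T hT1 hT2 hT3 using hN K hK
    let Ex : (Fin N0 → Option α) → Set (K → Option α) := fun x => {y | Sum.elim x y ∈ E}
    have hEx : ∀ x, Ins i (Ex x) := fun x => hE.comap (isSub_right x)
    let S1 : Set (Fin N0 ⊕ K → Option α) := ⋃ x, (fun y => Sum.elim x y) '' (T (Ex x))
    have hS1 : Tiled M S1 := by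
      refine Tiled.iUnion (fun x => (hT2 _ (hEx x)).image (isSub_right x)) ?_
      intro x y hxy
      rw [Set.disjoint_left]
      rintro _ ⟨a, _, rfl⟩ ⟨b, _, hb⟩
      apply hxy
      ext1 k
      exact (congrFun hb (Sum.inl k)).symm
    have hS1m : ∀ x y, Sum.elim x y ∈ S1 ↔ y ∈ T (Ex x) := by
      intro x y
      simp only [S1, Set.mem_iUnion, Set.mem_image]
      constructor
      · rintro ⟨x', y', hy', he⟩
        have h1 : x' = x := by ext1 k; exact congrFun he (Sum.inl k)
        have h2 : y' = y := by ext1 k; exact congrFun he (Sum.inr k)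
        subst h1 h2
        exact hy'
      · intro hy
        exact ⟨x, y, hy, rfl⟩
    have hS1E : S1 ⊆ E := by
      rintro _ ⟨_, ⟨x, rfl⟩, y, hy, rfl⟩
      exact hT1 _ (hEx x) hy
    let L := E \ S1
    have hL : mu L ≤ max β (1 - j * (c * (β / 2))) := by
      rw [← mu_sum, mu_prod]
      refine (av_mono (g := fun _ => max β (1 - j * (c * (β / 2)))) fun x => ?_).trans
        (by rw [av_const])
      refine le_trans (le_of_eq ?_) (hT3 _ (hEx x))
      congr 1
      ext y
      simp only [L, Set.mem_setOf_eq, Set.mem_diff, hS1m]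
      rfl
    by_cases hLβ : mu L ≤ β
    · exact ⟨S1, hS1E, hS1, le_max_of_le_left hLβ⟩
    push Not at hLβ
    let Ly : (K → Option α) → Set (Fin N0 → Option α) := fun y => {x | Sum.elim x y ∈ L}
    have hLy : ∀ y, Ins i (Ly y) := by
      intro y x x' hxx hx
      have hEE : Ex x = Ex x' := by
        have h1 : ∀ z, sb i (Sum.elim x z : Fin N0 ⊕ K → Option α) = sb i (Sum.elim x' z) := by
          intro z
          ext1 k
          rcases k with k | k
          · exact congrFun hxx k
          · rfl
        ext z
        exact ⟨fun hz => hE _ _ (h1 z) hz, fun hz => hE _ _ (h1 z).symm hz⟩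
      simp only [Ly, L, Set.mem_setOf_eq, Set.mem_diff, hS1m] at hx ⊢
      rw [← hEE]
      refine ⟨?_, hx.2⟩
      change y ∈ Ex x'
      rw [← hEE]
      exact hx.1
    have hR : ∀ y, ∃ R ⊆ Ly y, Tiled M R ∧ c * (mu (Ly y) - β / 2) ≤ mu R := by
      intro y
      by_cases hy : β / 2 ≤ mu (Ly y)
      · obtain ⟨F, hF, hFE⟩ := hN0 (Fin N0) (by simp) (Ly y) (hLy y) hy
        refine ⟨Set.range F, by rintro _ ⟨x, rfl⟩; exact hFE x, Tiled.range hF, ?_⟩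
        have hmr : mu (Set.range F) = c := by
          rw [mu, av_indicator_range F hF.inj, av_const, mul_one]
        rw [hmr]
        have := mu_le_one (Ly y)
        nlinarith
      · exact ⟨∅, by simp, Tiled.empty, by
          have := mu_nonneg (∅ : Set (Fin N0 → Option α))
          push Not at hy
          nlinarith⟩
    choose R hR1 hR2 hR3 using hR
    let S2 : Set (Fin N0 ⊕ K → Option α) := ⋃ y, (fun x => Sum.elim x y) '' (R y)
    have hS2 : Tiled M S2 := by
      refine Tiled.iUnion (fun x => (hR2 x).image (isSub_left x)) ?_
      intro x y hxy
      rw [Set.disjoint_left]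
      rintro _ ⟨a, _, rfl⟩ ⟨b, _, hb⟩
      apply hxy
      ext1 k
      exact (congrFun hb (Sum.inr k)).symm
    have hS2L : S2 ⊆ L := by
      rintro _ ⟨_, ⟨y, rfl⟩, x, hx, rfl⟩
      exact hR1 _ hx
    have hm : c * (mu L - β / 2) ≤ mu S2 := by
      rw [← mu_sum, mu_prod', ← mu_sum S2, mu_prod']
      have : ∀ r : ℝ, r = av fun _ : K → Option α => r := fun r => (av_const r).symm
      rw [this (β / 2), ← av_sub, ← av_mul]
      refine av_mono fun y => (hR3 y).trans (mu_mono ?_)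
      intro x hx
      exact Set.mem_iUnion.2 ⟨y, x, hx, rfl⟩
    have hd : Disjoint S1 S2 := Set.disjoint_left.2 fun x h1 h2 => (hS2L h2).2 h1
    refine ⟨S1 ∪ S2, Set.union_subset hS1E (hS2L.trans Set.sdiff_subset), hS1.union hS2 hd, ?_⟩
    have : E \ (S1 ∪ S2) = L \ S2 := by
      ext; simp [L, not_or, and_assoc]
    rw [this, mu_diff hS2L]
    refine le_max_of_le_right ?_
    have h1 : mu L ≤ 1 - j * (c * (β / 2)) := by
      rcases le_max_iff.1 hL with h | h
      · linarith
      · exact h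
    have : c * (β / 2) ≤ c * (mu L - β / 2) := by
      apply mul_le_mul_of_nonneg_left _ hc.le
      linarith
    push_cast
    linarith

theorem tile [Finite α] [Nonempty α] (M : ℕ) (h : Mdhj α M) (i : α) (β : ℝ) (hβ : 0 < β) :
    ∃ N : ℕ, ∀ (ι : Type) [Finite ι], N ≤ Nat.card ι →
      ∀ E : Set (ι → Option α), Ins i E → ∃ S ⊆ E, Tiled M S ∧ mu (E \ S) ≤ β := by
  obtain ⟨c, hc, hj⟩ := tileStep M h i β hβ
  obtain ⟨j, hj1⟩ := exists_nat_gt (1 / (c * (β / 2)))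
  obtain ⟨N, hN⟩ := hj j
  refine ⟨N, fun ι _ hι E hE => ?_⟩
  obtain ⟨S, h1, h2, h3⟩ := hN ι hι E hE
  refine ⟨S, h1, h2, h3.trans (max_le le_rfl ?_)⟩
  rw [div_lt_iff₀ (by positivity)] at hj1
  linarith

theorem upper [Finite α] [Nonempty α] (h : ∀ M, Mdhj α M) (δ : ℝ) (hδ : 0 ≤ δ)
    (H2 : ∀ γ : ℝ, 0 < γ → ∃ N : ℕ, ∀ (ι : Type) [Finite ι], N ≤ Nat.card ι →
      ∀ A : Set (ι → Option α), LineFree A → mu A ≤ δ + γ) (T : Finset α) :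
    ∀ β : ℝ, 0 < β → ∃ N : ℕ, ∀ (ι : Type) [Finite ι], N ≤ Nat.card ι →
      ∀ A : Set (ι → Option α), LineFree A → ∀ E : α → Set (ι → Option α), (∀ i, Ins i (E i)) →
        mu (A ∩ {x | ∀ i ∈ T, x ∈ E i}) ≤ δ * mu {x | ∀ i ∈ T, x ∈ E i} + β := by
  induction T using Finset.induction_on with
  | empty =>
    intro β hβ
    obtain ⟨N, hN⟩ := H2 β hβ
    refine ⟨N, fun ι _ hι A hA E _ => ?_⟩
    simpa [mu_univ] using hN ι hι A hA
  | insert i T hi ih =>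
    intro β hβ
    obtain ⟨M, hM⟩ := ih (β / 2) (by positivity)
    obtain ⟨N, hN⟩ := tile M (h M) i (β / 2) (by positivity)
    refine ⟨N, fun ι _ hι A hA E hE => ?_⟩
    obtain ⟨S, hSE, hST, hSm⟩ := hN ι hι (E i) (hE i)
    set E' : Set (ι → Option α) := {x | ∀ i ∈ T, x ∈ E i} with hE'
    have hEE : {x : ι → Option α | ∀ j ∈ insert i T, x ∈ E j} = E' ∩ E i := by
      ext x; simp [E', and_comm]
    rw [hEE]
    let one : (ι → Option α) → ℝ := fun _ => 1
    let w : (ι → Option α) → ℝ := fun x => (A ∩ E').indicator one x - δ * E'.indicator one x - β / 2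
    have hw : av (S.indicator w) ≤ 0 := by
      refine hST.av_le w fun F hF => ?_
      have := hM (Fin M) (by simp) _ (hA.comap hF) (fun j => {x | F x ∈ E j})
        (fun j => (hE j).comap hF)
      simp only [w]
      rw [av_sub, av_sub, av_mul, av_const]
      have h1 : av (fun z => (A ∩ E').indicator one (F z)) ≤
        δ * av (fun z => E'.indicator one (F z)) + β / 2 := this
      linarith
    have key : mu (A ∩ (E' ∩ E i)) ≤ av (fun x => S.indicator w x +
        (δ * (E' ∩ E i).indicator one x + (β / 2 + (E i \ S).indicator one x))) := by
      refine av_mono fun x => ?_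
      change (A ∩ (E' ∩ E i)).indicator one x ≤ _
      have h0 : 0 ≤ δ * (E' ∩ E i).indicator one x :=
        mul_nonneg hδ (Set.indicator_nonneg (fun _ _ => zero_le_one) x)
      by_cases hxS : x ∈ S
      · have hxi := hSE hxS
        by_cases hxE : x ∈ E' <;> by_cases hxA : x ∈ A <;>
          simp [Set.indicator, w, hxS, hxi, hxE, hxA, one]
      · by_cases hxi : x ∈ E i
        · have h1 : (A ∩ (E' ∩ E i)).indicator one x ≤ 1 :=
            Set.indicator_le' (fun _ _ => le_rfl) (fun _ _ => zero_le_one) x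
          have h2 : (E i \ S).indicator one x = 1 := by simp [Set.indicator, hxi, hxS, one]
          have h3 : S.indicator w x = 0 := by simp [hxS]
          linarith
        · simp [Set.indicator, hxS, hxi]
          positivity
    rw [av_add, av_add, av_mul, av_add, av_const] at key
    have hSm' : av ((E i \ S).indicator one) ≤ β / 2 := hSm
    have : mu (E' ∩ E i) = av ((E' ∩ E i).indicator one) := rfl
    rw [this]
    linarith

end tile
end DHJ

namespace DHJ
section fin
variable {α : Type}

lemma mu_part {X κ : Type} [Finite X] [Fintype κ] (g : X → κ) (A : Set X) :
    mu A = ∑ k, mu (A ∩ {x | g x = k}) := by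
  unfold mu
  rw [← av_fsum]
  congr 1
  ext x
  by_cases hx : x ∈ A
  · simp [Set.indicator, hx]
  · simp [Set.indicator, hx]

lemma av_swap {X Y : Type} [Finite X] [Finite Y] [Nonempty X] {P : X → Y → Prop} (θ : ℝ)
    (h : ∀ x, θ ≤ mu {y | P x y}) : θ ≤ av fun y => mu {x | P x y} := by
  have h1 : mu {p : X × Y | P p.1 p.2} = av fun y => mu {x | P x y} := mu_prod' _
  have h2 : mu {p : X × Y | P p.1 p.2} = av fun x => mu {y | P x y} := mu_prod _
  rw [← h1, h2, ← av_const (X := X) θ]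
  exact av_mono h

lemma all_dense {X : Type} [Finite X] [Nonempty X] (f : X → ℝ) (δ γ : ℝ) (hγ : 0 ≤ γ)
    (h1 : ∀ x, f x ≤ δ + γ) (h2 : δ - γ ≤ av f) (x : X) : δ - 2 * γ * Nat.card X ≤ f x := by
  let := Fintype.ofFinite X
  have hc : (0 : ℝ) < (Nat.card X : ℝ) := by exact_mod_cast Nat.card_pos
  rw [av_eq, le_div_iff₀ hc, ← Finset.add_sum_erase _ _ (mem_univ x)] at h2
  have h3 : ∑ y ∈ univ.erase x, f y ≤ ∑ y ∈ univ.erase x, (δ + γ) := Finset.sum_le_sum fun y _ => h1 y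
  rw [Finset.sum_const, Finset.card_erase_of_mem (mem_univ x), nsmul_eq_mul, Finset.card_univ,
    Nat.cast_sub Fintype.card_pos, ← Nat.card_eq_fintype_card] at h3
  push_cast at h3
  nlinarith

lemma fin_step [Finite α] [Nonempty α] (h : ∀ M, Mdhj α M) (δ : ℝ) (hδ : 0 < δ)
    (H2 : ∀ γ : ℝ, 0 < γ → ∃ N : ℕ, ∀ (ι : Type) [Finite ι], N ≤ Nat.card ι →
      ∀ A : Set (ι → Option α), LineFree A → mu A ≤ δ + γ)
    (θ : ℝ) (hθ : 0 < θ) :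
    ∃ m : ℕ, ∀ A : Set (Fin m → Option α), LineFree A → ∀ D : α → Set (Fin m → Option α),
      (∀ i, Ins i (D i)) → (∀ x ∈ A, ¬ ∀ i, x ∈ D i) →
      δ - (δ * θ / 16 * θ / 4) + δ * θ / 16 * θ ≤ mu A + δ * θ / 16 * mu {x | ∀ i, x ∈ D i} →
      False := by
  let := Fintype.ofFinite α
  set c := δ * θ / 16 with hc
  have hc0 : 0 < c := by positivity
  set q : ℝ := ((Fintype.card (Finset α) : ℕ) : ℝ) with hq
  have hq0 : 0 < q := by rw [hq]; exact_mod_cast Fintype.card_pos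
  obtain ⟨N1, hN1⟩ := upper h δ hδ.le H2 univ (δ * θ / (8 * q)) (by positivity)
  obtain ⟨N2, hN2⟩ := H2 (c * θ / 4) (by positivity)
  refine ⟨max N1 N2, fun A hA D hD hAD hs => ?_⟩
  have hA2 := hN2 _ (by simp) A hA
  set ND := mu {x : Fin (max N1 N2) → Option α | ∀ i, x ∈ D i} with hND
  have hD1 : θ / 2 ≤ ND := by
    have : c * (θ / 2) ≤ c * ND := by linarith
    exact le_of_mul_le_mul_left this hc0
  have hD2 : ND ≤ 1 := mu_le_one _
  have hA1 : δ - 2 * c ≤ mu A := by nlinarith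
  let g : (Fin (max N1 N2) → Option α) → Finset α := fun x => univ.filter fun i => x ∈ D i
  let E : Finset α → α → Set (Fin (max N1 N2) → Option α) := fun s i => if i ∈ s then D i else (D i)ᶜ
  have hE : ∀ s i, Ins i (E s i) := by
    intro s i
    by_cases hi : i ∈ s
    · simp only [E, hi, if_true]; exact hD i
    · simp only [E, hi, if_false]
      intro x x' hxx hx hx'
      exact hx (hD i _ _ hxx.symm hx')
  have hcell : ∀ s, {x | ∀ i ∈ (univ : Finset α), x ∈ E s i} = {x | g x = s} := by
    intro s
    ext x
    simp only [Set.mem_ofPred_eq, mem_univ, true_imp_iff, g, Finset.ext_iff, mem_filter, true_and]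
    refine forall_congr' fun i => ?_
    by_cases hi : i ∈ s <;> simp [E, hi]
  have hb : ∀ s, mu (A ∩ {x | g x = s}) ≤ δ * mu {x | g x = s} + δ * θ / (8 * q) := by
    intro s
    have := hN1 (Fin (max N1 N2)) (by simp) A hA (E s) (hE s)
    rwa [hcell] at this
  have huniv : {x | g x = univ} = {x | ∀ i, x ∈ D i} := by
    ext x
    simp [g, Finset.ext_iff]
  have hb' : ∀ s, mu (A ∩ {x | g x = s}) ≤ (δ * mu {x | g x = s} + δ * θ / (8 * q)) -
      (if s = univ then δ * ND else 0) := by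
    intro s
    by_cases hs : s = univ
    · subst hs
      have h0 : A ∩ {x | g x = univ} = ∅ := by
        rw [huniv]
        exact Set.eq_empty_of_forall_notMem fun x hx => hAD x hx.1 hx.2
      have h00 : mu (∅ : Set (Fin (max N1 N2) → Option α)) = 0 := by simp [mu, av_const]
      rw [h0, h00, huniv, if_pos rfl]
      have : 0 < δ * θ / (8 * q) := by positivity
      linarith
    · rw [if_neg hs, sub_zero]; exact hb s
  have hsum : mu A ≤ ∑ s, ((δ * mu {x | g x = s} + δ * θ / (8 * q)) -
      (if s = univ then δ * ND else 0)) := by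
    rw [mu_part g A]
    exact Finset.sum_le_sum fun s _ => hb' s
  have h1 : ∑ s, mu {x | g x = s} = 1 := by
    have := mu_part g (Set.univ)
    rw [mu_univ] at this
    simpa using this.symm
  rw [Finset.sum_sub_distrib, Finset.sum_add_distrib, ← Finset.mul_sum, h1, Finset.sum_const,
    Finset.card_univ, nsmul_eq_mul, Finset.sum_ite_eq' univ univ] at hsum
  simp only [mem_univ, if_true] at hsum
  rw [← hq] at hsum
  have hq2 : q * (δ * θ / (8 * q)) = δ * θ / 8 := by field_simp
  rw [hq2] at hsum
  have : δ * (θ / 2) ≤ δ * ND := by gcongr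
  have : 0 < δ * θ := by positivity
  linarith

abbrev Ln (α : Type) (m : ℕ) := {F : (Unit → α) → (Fin m → α) // IsSub F}

lemma alt2 [Finite α] [Nonempty α] (δ : ℝ) (hδ : 0 < δ) (m0 : ℕ)
    (h0 : ∀ (ι : Type) [Finite ι], m0 ≤ Nat.card ι → ∀ A : Set (ι → α), δ / 2 ≤ mu A → ¬ LineFree A)
    {η J K : Type} [Finite η] [Finite J] [Finite K] (hη : Nat.card η = m0)
    (W : (η → Option α) → (J → Option α)) (hW : IsSubA W) (A : Set (J ⊕ K → Option α))
    (hA : ∀ t : J → Option α, δ ≤ mu {y : K → Option α | Sum.elim t y ∈ A}) :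
    ∃ l, (∃ j, l j = none) ∧ δ / (2 * (Nat.card (Ln α m0) + 1)) ≤
      mu {y : K → Option α | ∀ i, Sum.elim (fun j => some (sb i (W l) j)) y ∈ A} := by
  obtain ⟨e⟩ : Nonempty (η ≃ Fin m0) := ⟨(Finite.equivFin η).trans (finCongr hη)⟩
  let R : Set ((Fin m0 → α) × (K → Option α)) :=
    {p | Sum.elim (W (fun j => some (p.1 (e j)))) p.2 ∈ A}
  have hR : δ ≤ mu R := by
    rw [mu_prod, ← av_const (X := Fin m0 → α) δ]
    exact av_mono fun t => hA (W (fun j => some (t (e j))))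
  obtain ⟨⟨F, hF⟩, hl⟩ := pigeon (Λ := Ln α m0) (fun l => Set.range l.1) δ hδ _ hR (by
      intro S hS
      have := h0 (Fin m0) (by simp) S hS
      unfold LineFree at this
      push Not at this
      obtain ⟨F, hF, h2⟩ := this
      exact ⟨⟨F, hF⟩, by rintro _ ⟨x, rfl⟩; exact h2 x⟩)
  obtain ⟨f, hf, hF2⟩ := hF
  refine ⟨fun j => Sum.elim some (fun _ => none) (f (e j)), ?_, hl.trans (mu_mono ?_)⟩
  · obtain ⟨i, hi⟩ := hf ()
    exact ⟨e.symm i, by simp [hi]⟩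
  · intro y hy i
    have h1 := hy (F fun _ => i) ⟨_, rfl⟩
    change Sum.elim (W (fun j => some (F (fun _ => i) (e j)))) y ∈ A at h1
    convert h1 using 2
    ext1 k
    obtain ⟨g, hg, hW⟩ := hW
    simp only [sb, hW]
    rcases g k with a | j
    · simp
    · simp only [Sum.elim_inr, hF2]
      rcases f (e j) with a | u <;> simp

lemma line_of_none {J K : Type} (A : Set (J ⊕ K → Option α)) (hA : LineFree A)
    (v : J → Option α) (hv : ∃ j, v j = none) (y : K → Option α) (h1 : Sum.elim v y ∈ A)
    (h2 : ∀ i, Sum.elim (fun j => some (sb i v j)) y ∈ A) : False := by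
  let F : (Unit → Option α) → (J ⊕ K → Option α) := fun u =>
    Sum.elim (fun j => (v j).elim (u ()) some) y
  have hF : IsSub F := by
    refine ⟨Sum.elim (fun j => (v j).elim (Sum.inr ()) (fun a => Sum.inl (some a)))
      (fun k => Sum.inl (y k)), ?_, ?_⟩
    · rintro ⟨⟩
      obtain ⟨j, hj⟩ := hv
      exact ⟨Sum.inl j, by simp [hj]⟩
    · rintro u (j | k)
      · simp only [F, Sum.elim_inl]
        rcases v j with _ | a <;> rfl
      · rfl
  obtain ⟨u, hu⟩ := hA F hF
  apply hu
  rcases hui : u () with _ | i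
  · convert h1 using 2
    ext1 j
    rw [hui]
    rcases v j with _ | a <;> rfl
  · convert h2 i using 2
    ext1 j
    rw [hui]
    simp only [sb]
    rcases v j with _ | a <;> rfl

theorem dhj_succ [Finite α] [Nonempty α] (h : Dhj α) : Dhj (Option α) := by
  have hM := mdhj_of_dhj α h
  by_contra hcon
  unfold Dhj at hcon
  push Not at hcon
  obtain ⟨δ0, hδ0, hcon⟩ := hcon
  let Z : Set ℝ := {d | ∀ N : ℕ, ∃ (ι : Type) (_ : Finite ι), N ≤ Nat.card ι ∧
    ∃ A : Set (ι → Option α), d ≤ mu A ∧ LineFree A}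
  have hZ0 : δ0 ∈ Z := by
    intro N
    obtain ⟨ι, hι, h1, A, h2, h3⟩ := hcon N
    exact ⟨ι, hι, h1, A, h2, h3⟩
  have hZb : ∀ d ∈ Z, d ≤ 1 := by
    intro d hd
    obtain ⟨ι, _, _, A, h2, _⟩ := hd 0
    exact h2.trans (mu_le_one A)
  have hbdd : BddAbove Z := ⟨1, hZb⟩
  set δ := sSup Z with hδd
  have hδ : 0 < δ := hδ0.trans_le (le_csSup hbdd hZ0)
  have hδ1 : δ ≤ 1 := csSup_le ⟨_, hZ0⟩ hZb
  have H2 : ∀ γ : ℝ, 0 < γ → ∃ N : ℕ, ∀ (ι : Type) [Finite ι], N ≤ Nat.card ι →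
      ∀ A : Set (ι → Option α), LineFree A → mu A ≤ δ + γ := by
    intro γ hγ
    have : δ + γ ∉ Z := fun hz => by
      have := le_csSup hbdd hz
      linarith
    by_contra hc
    push Not at hc
    apply this
    intro N
    obtain ⟨ι, hι, h1, A, h2, h3⟩ := hc N
    exact ⟨ι, hι, h1, A, h3.le, h2⟩
  obtain ⟨m0, hm0⟩ := h (δ / 2 / 2) (by positivity)
  set θ : ℝ := (δ / 2) / (2 * (Nat.card (Ln α m0) + 1)) with hθd
  have hθ : 0 < θ := by positivity
  have hθ1 : θ ≤ 1 := by
    rw [hθd, div_le_one (by positivity)]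
    have : (0:ℝ) ≤ Nat.card (Ln α m0) := by positivity
    linarith
  obtain ⟨m, hm⟩ := fin_step hM δ hδ H2 θ hθ
  obtain ⟨J, hJ, hgr⟩ := gr α m m0 Unit
  set c := δ * θ / 16 with hc
  have hc0 : 0 < c := by positivity
  set ν := c * θ / 4 with hν
  have hν0 : 0 < ν := by positivity
  have hνδ : ν ≤ δ / 2 := by
    have : δ * θ ≤ δ := by nlinarith
    have : c ≤ δ := by rw [hc]; linarith
    have : c * θ ≤ c := by nlinarith
    rw [hν]; linarith
  set n : ℝ := ((Nat.card (J → Option α) : ℕ) : ℝ) with hn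
  have hn0 : 0 < n := by rw [hn]; exact_mod_cast Nat.card_pos
  set γ := ν / (2 * n) with hγ
  have hγ0 : 0 < γ := by positivity
  obtain ⟨N2, hN2⟩ := H2 γ hγ0
  obtain ⟨d, hd, hdδ⟩ := exists_lt_of_lt_csSup ⟨_, hZ0⟩ (show δ - γ < sSup Z by linarith)
  obtain ⟨ι, hι, hιN, A0, hA0, hA0l⟩ := hd (Nat.card J + N2)
  obtain ⟨e0⟩ := exists_split (ι := ι) (Nat.card J) (by omega)
  set K := Fin (Nat.card ι - Nat.card J)
  have hK : N2 ≤ Nat.card K := by simp [K]; omega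
  let e : ι ≃ J ⊕ K := e0.trans (Equiv.sumCongr (Finite.equivFin J).symm (Equiv.refl _))
  let A : Set ((J ⊕ K) → Option α) := {x | (fun i => x (e i)) ∈ A0}
  have hAm : mu A = mu A0 := mu_reindex e A0
  have hA : LineFree A := hA0l.comap (isSub_reindex e)
  have hsec : ∀ t : J → Option α, δ - ν ≤ mu {y : K → Option α | Sum.elim t y ∈ A} := by
    intro t
    have := all_dense (fun t : J → Option α => mu {y : K → Option α | Sum.elim t y ∈ A}) δ γ hγ0.le
      (fun t => hN2 K hK _ (hA.comap (isSub_right t))) (by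
        have := mu_prod {p : (J → Option α) × (K → Option α) | Sum.elim p.1 p.2 ∈ A}
        rw [mu_sum] at this
        have h2 : mu A = av (fun t : J → Option α => mu {y : K → Option α | Sum.elim t y ∈ A}) := this
        rw [← h2]
        linarith) t
    have h3 : 2 * γ * (Nat.card (J → Option α)) = ν := by
      rw [← hn, hγ]; field_simp
    rwa [h3] at this
  rcases hgr (fun l _ => (∃ j, l j = none) ∧
      θ ≤ mu {y : K → Option α | ∀ i, Sum.elim (fun j => some (sb i l j)) y ∈ A}) with
    ⟨_, V, hV, hgood⟩ | ⟨η, hη, hηc, W, hW, hbad⟩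
  · -- main case
    have hDm : θ ≤ av fun y : K → Option α =>
        mu {x | ∀ i, Sum.elim (fun j => some (sb i (V x) j)) y ∈ A} := by
      exact av_swap (P := fun (x : Fin m → Option α) (y : K → Option α) =>
        ∀ i, Sum.elim (fun j => some (sb i (V x) j)) y ∈ A) θ fun x => (hgood x).2
    have hAm' : δ - ν ≤ av fun y : K → Option α => mu {x | Sum.elim (V x) y ∈ A} := by
      exact av_swap (P := fun (x : Fin m → Option α) (y : K → Option α) =>
        Sum.elim (V x) y ∈ A) _ fun x => hsec (V x)
    obtain ⟨y, hy⟩ := exists_av_le (fun y : K → Option α => mu {x | Sum.elim (V x) y ∈ A} +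
      c * mu {x | ∀ i, Sum.elim (fun j => some (sb i (V x) j)) y ∈ A})
    rw [av_add, av_mul] at hy
    refine hm {x | Sum.elim (V x) y ∈ A} (hA.comap ((isSub_left y).comp hV))
      (fun i => {x | Sum.elim (fun j => some (sb i (V x) j)) y ∈ A}) ?_ ?_ ?_
    · intro i x x' hxx hx
      have := sb_sub i hV hxx
      change Sum.elim (fun j => some (sb i (V x') j)) y ∈ A
      rw [← this]
      exact hx
    · intro x hx hx2
      exact line_of_none A hA (V x) (hgood x).1 y hx hx2
    · refine le_trans ?_ hy
      have := mul_le_mul_of_nonneg_left hDm hc0.le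
      linarith
  · obtain ⟨l, hl1, hl2⟩ := alt2 (δ / 2) (by positivity) m0 hm0 hηc W hW A (fun t => by
      have := hsec t
      linarith)
    refine hbad l hl1 () ⟨?_, hl2⟩
    obtain ⟨j, hj⟩ := hl1
    obtain ⟨g, hg, hW⟩ := hW
    obtain ⟨k, hk⟩ := hg j
    exact ⟨k, by simp [hW, hk, hj]⟩

lemma dhj_unit : Dhj Unit := by
  intro δ hδ
  refine ⟨1, fun ι _ hι A hA hl => ?_⟩
  have : Nonempty ι := by
    by_contra hne
    rw [not_nonempty_iff] at hne
    simp at hι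
  obtain ⟨i0⟩ := this
  obtain ⟨x, hx⟩ := hl (fun u _ => u ()) ⟨fun _ => Sum.inr (), fun _ => ⟨i0, rfl⟩, fun _ _ => rfl⟩
  have : A = ∅ := by
    refine Set.eq_empty_of_forall_notMem fun z hz => hx ?_
    convert hz
  subst this
  have : mu (∅ : Set (ι → Unit)) = 0 := by simp [mu, av_const]
  linarith

theorem dhj_all (k : ℕ) : ∃ (α : Type) (_ : Fintype α), Nonempty α ∧ Fintype.card α = k + 1 ∧ Dhj α := by
  induction k with
  | zero => exact ⟨Unit, inferInstance, inferInstance, by simp, dhj_unit⟩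
  | succ k ih =>
    obtain ⟨α, _, _, hc, hd⟩ := ih
    exact ⟨Option α, inferInstance, inferInstance, by simp [hc], dhj_succ hd⟩

end fin
end DHJ

namespace DHJ

lemma mu_filter {X : Type} [Fintype X] (p : X → Prop) :
    mu {x | p x} = ((univ.filter p).card : ℝ) / (Fintype.card X : ℝ) := by
  rw [mu, av_eq, Nat.card_eq_fintype_card]
  congr 1
  simp [Set.indicator, Finset.sum_boole]

lemma mu_sub {X : Type} [Fintype X] (p q : X → Prop) :
    mu {s : {x // p x} | q s.1} = ((univ.filter fun x => p x ∧ q x).card : ℝ) /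
      ((univ.filter p).card : ℝ) := by
  rw [mu_filter, Fintype.card_subtype]
  congr 2
  rw [← Finset.card_map (Function.Embedding.subtype p)]
  congr 1
  ext x
  simp [and_comm]

lemma mu_fib {Y S : Type} [Finite Y] [Finite S] [AddCommGroup S] [Nonempty Y] (Φ : Y → S)
    (h : ∀ s, ∃ T : Y ≃ Y, ∀ y, Φ (T y) = Φ y + s) (B : Set S) : mu {y | Φ y ∈ B} = mu B := by
  have h1 : ∀ s, mu {y | Φ y + s ∈ B} = mu {y | Φ y ∈ B} := by
    intro s
    obtain ⟨T, hT⟩ := h s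
    rw [← mu_equiv T {y | Φ y ∈ B}]
    congr 1
    ext y
    simp [hT]
  have h2 : mu {p : Y × S | Φ p.1 + p.2 ∈ B} = av fun s => mu {y | Φ y + s ∈ B} := mu_prod' _
  have h3 : mu {p : Y × S | Φ p.1 + p.2 ∈ B} = av fun y => mu {s | Φ y + s ∈ B} := mu_prod _
  simp only [h1, av_const] at h2
  rw [← h2, h3, ← av_const (X := Y) (mu B)]
  congr 1
  ext y
  exact mu_equiv (Equiv.addLeft (Φ y)) B

lemma core (N k : ℕ) (α : Type) [Fintype α] [Nonempty α] (e : α ≃ Fin k) (ε : ℝ) (hε : 0 < ε)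
    (hN : ∀ (ι : Type) [Finite ι], N ≤ Nat.card ι → ∀ A : Set (ι → α), ε / 2 ≤ mu A → ¬ LineFree A)
    (G : Type) [Fintype G] [AddCommGroup G] (M : (Fin k → G) →+ (Fin k → G))
    (hM : ∀ x : G, M (fun _ => x) = 0) (A : Finset G)
    (hA : ε * (Fintype.card G : ℝ) < (A.card : ℝ)) :
    ε / (2 * (Nat.card (Ln α N) + 1)) ≤ mu {s : M.ker | ∀ i, s.1 i ∈ A} := by
  have hG : (0:ℝ) < Fintype.card G := by exact_mod_cast Fintype.card_pos
  have hA2 : ε ≤ mu {x : G | x ∈ A} := by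
    rw [mu_filter, le_div_iff₀ hG]
    simpa using hA.le
  let Y := G × (Fin N → M.ker)
  let R : Set ((Fin N → α) × Y) := {p | p.2.1 + ∑ j, (p.2.2 j).1 (e (p.1 j)) ∈ A}
  have hR : ε ≤ mu R := by
    rw [mu_prod, ← av_const (X := Fin N → α) ε]
    refine av_mono fun w => hA2.trans ?_
    have h1 : mu {y : Y | (w, y) ∈ R} =
      av fun s : Fin N → M.ker => mu {x0 : G | x0 + ∑ j, (s j).1 (e (w j)) ∈ A} := mu_prod' _
    rw [h1, ← av_const (X := Fin N → M.ker) (mu {x : G | x ∈ A})]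
    exact av_mono fun s => (mu_equiv (Equiv.addRight (∑ j, (s j).1 (e (w j)))) {x : G | x ∈ A}).ge
  obtain ⟨⟨F, hF⟩, hl⟩ := pigeon (Λ := Ln α N) (fun l => Set.range l.1) ε hε _ hR (by
      intro S hS
      have := hN (Fin N) (by simp) S hS
      unfold LineFree at this
      push Not at this
      obtain ⟨F, hF, h2⟩ := this
      exact ⟨⟨F, hF⟩, by rintro _ ⟨x, rfl⟩; exact h2 x⟩)
  obtain ⟨f, hf, hF2⟩ := hF
  obtain ⟨j0, hj0⟩ := hf ()
  have hker : ∀ y : Y, (fun i => y.1 + ∑ j, (y.2 j).1 (e (F (fun _ => e.symm i) j))) ∈ M.ker := by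
    intro y
    rw [AddMonoidHom.mem_ker]
    have h1 : (fun i => y.1 + ∑ j, (y.2 j).1 (e (F (fun _ => e.symm i) j))) =
        (fun _ => y.1) + ∑ j, (fun i => (y.2 j).1 (e (F (fun _ => e.symm i) j))) := by
      ext i
      simp
    rw [h1, map_add, hM, map_sum, zero_add]
    refine Finset.sum_eq_zero fun j _ => ?_
    simp only [hF2]
    rcases f j with a | u
    · simp [hM]
    · have h3 : M (y.2 j).1 = 0 := (y.2 j).2
      simpa using h3
  let Φ : Y → M.ker := fun y => ⟨_, hker y⟩
  rw [← mu_fib Φ (fun s => ⟨Equiv.addRight ((0, Pi.single j0 s) : Y), fun y => ?_⟩)]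
  · refine hl.trans (mu_mono fun y hy i => ?_)
    exact hy _ ⟨fun _ => e.symm i, rfl⟩
  · ext i
    change (y.1 + 0) + ∑ j, ((y.2 j).1 (e (F (fun _ => e.symm i) j)) +
        ((Pi.single j0 s : Fin N → M.ker) j).1 (e (F (fun _ => e.symm i) j))) =
      (y.1 + ∑ j, (y.2 j).1 (e (F (fun _ => e.symm i) j))) + s.1 i
    rw [Finset.sum_add_distrib, add_zero, ← add_assoc]
    congr 1
    rw [Finset.sum_eq_single j0]
    · simp [hF2, hj0]
    · intro j _ hj
      simp [Pi.single_eq_of_ne hj]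
    · simp

end DHJ

/-- V-property (Varnavides/supersaturation) for configuration systems arising from
invariant group homomorphisms on finite abelian groups. -/
theorem stmt4 (k : ℕ) (hk : 1 ≤ k) (ε : ℝ) (hε : 0 < ε) :
    ∃ γ : ℝ, 0 < γ ∧
      ∀ (G : Type) [Fintype G] [AddCommGroup G]
        (M : (Fin k → G) →+ (Fin k → G)),
        (∀ x : G, M (fun _ => x) = 0) →
        ∀ A : Finset G, ε * (Fintype.card G : ℝ) < (A.card : ℝ) →
          γ * ((Finset.univ.filter (fun x : Fin k → G => M x = 0)).card : ℝ)
            ≤ ((Finset.univ.filter (fun x : Fin k → G =>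
                  M x = 0 ∧ ∀ j, x j ∈ A)).card : ℝ) := by
  obtain ⟨α, _, _, hc, hd⟩ := DHJ.dhj_all (k - 1)
  have e : α ≃ Fin k := (Fintype.equivFin α).trans (finCongr (by omega))
  obtain ⟨N, hN⟩ := hd (ε / 2) (by positivity)
  refine ⟨ε / (2 * (Nat.card (DHJ.Ln α N) + 1)), by positivity, fun G _ _ M hM A hA => ?_⟩
  have h1 := DHJ.core N k α e ε hε hN G M hM A hA
  have h2 := DHJ.mu_sub (fun x : Fin k → G => x ∈ M.ker) (fun x => ∀ i, x i ∈ A)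
  have h3 := h1.trans h2.le
  simp only [AddMonoidHom.mem_ker] at h3
  rwa [le_div_iff₀] at h3
  have : 0 < (Finset.univ.filter (fun x : Fin k → G => M x = 0)).card :=
    Finset.card_pos.2 ⟨0, by simp⟩
  exact_mod_cast this
end

section
/- Let δ ∈ (0,1) and k ≥ 2, and let {(S_i,G_i)}_{i≥1} be a sequence of systems of configurations of degree k. Set p_i* = min{ max over U ⊆ {1,…,k} with |U| ≥ 2 of (|G_i|/|π_U(S_i^{(k)})|)^{1/(|U|−1)}, 1 }. Then there exists c > 0 depending only on δ and k (one may take c = (1−δ)/4) such that the following holds: if p(i) ∈ [0,1] is a sequence with p(i)·|G_i| → ∞ and p(i)·|S_i^{(k)}|^{1/k} → ∞, with p(i) ≤ c·p_i* for all i, and the sequence {(S_i,G_i)} is concentrated for p, then P_{p(i)}({A ⊆ G_i : A is (δ,S_i)_k-stable}) → 0 as i → ∞. -/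
open Finset Filter Topology

attribute [local instance] Classical.propDecidable

/-- The set `S^{(k)}` of tuples of `S` with pairwise distinct entries. -/
noncomputable def distinctPart {k : ℕ} {G : Type} (S : Finset (Fin k → G)) :
    Finset (Fin k → G) :=
  S.filter fun x => Function.Injective x

/-- `|π_U(S)|`: the number of projections of tuples of `S` to the coordinates in `U`. -/
noncomputable def projCard {k : ℕ} {G : Type} (S : Finset (Fin k → G))
    (U : Finset (Fin k)) : ℕ :=
  (S.image (fun x => fun j : {a : Fin k // a ∈ U} => x j.1)).card

/-- `|π_U(S) ∩ A^{|U|}|`: the number of projections of tuples of `S` to the coordinates in `U`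
all of whose entries lie in `A`. -/
noncomputable def projCardIn {k : ℕ} {G : Type} (S : Finset (Fin k → G))
    (U : Finset (Fin k)) (A : Finset G) : ℕ :=
  ((S.filter (fun x => ∀ j ∈ U, x j ∈ A)).image
    (fun x => fun j : {a : Fin k // a ∈ U} => x j.1)).card

/-- Probability assigned to a family `E` of subsets of `G` by the binomial random subset
`[G]_p`. -/
noncomputable def binomProb {G : Type} [Fintype G] (p : ℝ) (E : Finset (Finset G)) : ℝ :=
  ∑ A ∈ E, p ^ A.card * (1 - p) ^ (Fintype.card G - A.card)

/-- `X` is `(δ,S)_k`-stable. -/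
def StableK {k : ℕ} {G : Type} (δ : ℝ) (S : Finset (Fin k → G)) (X : Finset G) : Prop :=
  ∀ X' ⊆ X, δ * (X.card : ℝ) ≤ (X'.card : ℝ) →
    (∃ x ∈ S, ∀ j, x j ∈ X') ∧ (∃ x ∈ distinctPart S, ∀ j, x j ∈ X')

/-- The sequence `{(S_i,G_i)}` is concentrated for the probability sequence `p`. -/
def Concentrated (k : ℕ) (G : ℕ → Type) [∀ i, Fintype (G i)]
    (S : ∀ i, Finset (Fin k → G i)) (p : ℕ → ℝ) : Prop :=
  ∀ ε ε' : ℝ, 0 < ε → 0 < ε' → ∃ n₀ : ℕ, ∀ i, n₀ ≤ Fintype.card (G i) →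
    ∀ U : Finset (Fin k), 2 ≤ U.card →
      binomProb (p i) (Finset.univ.filter (fun A : Finset (G i) =>
        ε * (p i) ^ U.card * (projCard (distinctPart (S i)) U : ℝ) ≤
          |(projCardIn (distinctPart (S i)) U A : ℝ) -
            (p i) ^ U.card * (projCard (distinctPart (S i)) U : ℝ)|)) ≤ ε'

/-- The quantity `p* = min{max_{|U| ≥ 2} (|G|/|π_U(S^{(k)})|)^{1/(|U|-1)}, 1}`. -/
noncomputable def pStar {k : ℕ} {G : Type} [Fintype G] (S : Finset (Fin k → G)) : ℝ :=
  min (sSup {x : ℝ | ∃ U : Finset (Fin k), 2 ≤ U.card ∧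
    x = ((Fintype.card G : ℝ) / (projCard (distinctPart S) U : ℝ))
          ^ (1 / ((U.card : ℝ) - 1))}) 1

lemma aux_mono {G : Type} [Fintype G] {p : ℝ} (h0 : 0 ≤ p) (h1 : p ≤ 1)
    {E F H : Finset (Finset G)} (h : E ⊆ F ∪ H) :
    binomProb p E ≤ binomProb p F + binomProb p H := by
  unfold binomProb
  have hn : ∀ A : Finset G, 0 ≤ p ^ A.card * (1 - p) ^ (Fintype.card G - A.card) := fun A =>
    mul_nonneg (pow_nonneg h0 _) (pow_nonneg (by linarith) _)
  refine (Finset.sum_le_sum_of_subset_of_nonneg h (fun A _ _ => hn A)).trans ?_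
  rw [← Finset.sum_union_inter]
  have : 0 ≤ ∑ A ∈ F ∩ H, p ^ A.card * (1 - p) ^ (Fintype.card G - A.card) :=
    Finset.sum_nonneg (fun A _ => hn A)
  linarith

lemma aux_tail {G : Type} [Fintype G] {p : ℝ} (h0 : 0 ≤ p) (h1 : p ≤ 1) :
    binomProb p (Finset.univ.filter (fun A : Finset G =>
      (A.card : ℝ) < p * (Fintype.card G : ℝ) / 2)) ≤
      Real.exp (- (p * (Fintype.card G : ℝ)) / 10) := by
  set n := Fintype.card G with hn
  have hnn : ∀ A : Finset G, 0 ≤ p ^ A.card * (1 - p) ^ (n - A.card) := fun A =>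
    mul_nonneg (pow_nonneg h0 _) (pow_nonneg (by linarith) _)
  have step : binomProb p (Finset.univ.filter (fun A : Finset G =>
      (A.card : ℝ) < p * (n : ℝ) / 2)) ≤
      ∑ A : Finset G, Real.exp (p * n / 2) *
        ((p * Real.exp (-1)) ^ A.card * (1 - p) ^ (n - A.card)) := by
    unfold binomProb
    rw [Finset.sum_filter]
    refine Finset.sum_le_sum (fun A _ => ?_)
    have e : Real.exp (p * n / 2) * ((p * Real.exp (-1)) ^ A.card * (1 - p) ^ (n - A.card))
        = Real.exp (p * n / 2 - A.card) * (p ^ A.card * (1 - p) ^ (n - A.card)) := by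
      rw [mul_pow, ← Real.exp_nat_mul, sub_eq_add_neg (p * n / 2), Real.exp_add]
      rw [mul_neg_one]; ring
    rw [e]
    split_ifs with hA
    · have : 1 ≤ Real.exp (p * n / 2 - A.card) := Real.one_le_exp (by linarith)
      exact le_mul_of_one_le_left (hnn A) this
    · exact mul_nonneg (Real.exp_pos _).le (hnn A)
  refine step.trans ?_
  rw [← Finset.mul_sum, Fintype.sum_pow_mul_eq_add_pow]
  have he : Real.exp (-1) ≤ 2/5 := by
    have := Real.exp_neg_one_lt_d9
    linarith
  have hb : p * Real.exp (-1) + (1 - p) ≤ Real.exp (-(3/5) * p) := by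
    have := Real.add_one_le_exp (-(3/5) * p)
    nlinarith
  have hb0 : 0 ≤ p * Real.exp (-1) + (1 - p) :=
    add_nonneg (mul_nonneg h0 (Real.exp_pos _).le) (by linarith)
  calc _ ≤ Real.exp (p * n / 2) * (Real.exp (-(3/5) * p)) ^ n := by gcongr
    _ = Real.exp (- (p * n) / 10) := by
      rw [← Real.exp_nat_mul, ← Real.exp_add]; congr 1; ring

lemma aux_exists {k : ℕ} (hk : 2 ≤ k) {G : Type} [Fintype G] (S : Finset (Fin k → G))
    (hS : (distinctPart S).Nonempty) {p c : ℝ} (hp : 0 ≤ p) (hc0 : 0 ≤ c) (hc1 : c ≤ 1)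
    (h : p ≤ c * pStar S) :
    ∃ U : Finset (Fin k), 2 ≤ U.card ∧
      p ^ U.card * (projCard (distinctPart S) U : ℝ) ≤ c * (p * (Fintype.card G : ℝ)) := by
  set T : Set ℝ := {x : ℝ | ∃ U : Finset (Fin k), 2 ≤ U.card ∧
    x = ((Fintype.card G : ℝ) / (projCard (distinctPart S) U : ℝ))
          ^ (1 / ((U.card : ℝ) - 1))} with hT
  have hfin : T.Finite := by
    refine (Set.finite_range (fun U : Finset (Fin k) =>
      ((Fintype.card G : ℝ) / (projCard (distinctPart S) U : ℝ))
          ^ (1 / ((U.card : ℝ) - 1)))).subset ?_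
    rintro x ⟨U, _, rfl⟩
    exact ⟨U, rfl⟩
  have hne : T.Nonempty := ⟨_, Finset.univ, by simpa using hk, rfl⟩
  obtain ⟨U, hU, hx⟩ := hne.csSup_mem hfin
  refine ⟨U, hU, ?_⟩
  have hle : pStar S ≤ sSup T := min_le_left _ _
  rw [hx] at hle
  obtain ⟨m, hm⟩ : ∃ m, U.card = m + 2 := ⟨U.card - 2, by omega⟩
  have hpos : 0 < (projCard (distinctPart S) U : ℝ) := by
    unfold projCard
    exact_mod_cast (hS.image _).card_pos
  set P : ℝ := (projCard (distinctPart S) U : ℝ)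
  set q : ℝ := (Fintype.card G : ℝ) / P with hq
  have hq0 : 0 ≤ q := by positivity
  have h2 : p ≤ c * q ^ (1 / ((U.card : ℝ) - 1)) :=
    h.trans (mul_le_mul_of_nonneg_left hle hc0)
  have h3 : p ^ (m+1) ≤ c * q := by
    calc p ^ (m+1) ≤ (c * q ^ (1 / ((U.card : ℝ) - 1))) ^ (m+1) := by gcongr
      _ = c ^ (m+1) * q := by
        rw [mul_pow, ← Real.rpow_natCast (q ^ _), ← Real.rpow_mul hq0, hm]
        have : (1 / (((m + 2 : ℕ) : ℝ) - 1)) * ((m+1 : ℕ) : ℝ) = 1 := by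
          push_cast
          have : (m : ℝ) + 2 - 1 ≠ 0 := ne_of_gt <| by have : (0:ℝ) ≤ m := Nat.cast_nonneg m; linarith
          field_simp; ring
        rw [this, Real.rpow_one]
      _ ≤ c * q := by
        gcongr
        exact pow_le_of_le_one hc0 hc1 (by omega)
  calc p ^ U.card * P = p * P * p ^ (m+1) := by rw [hm]; ring
    _ ≤ p * P * (c * q) := by gcongr
    _ = c * (p * (Fintype.card G : ℝ)) := by rw [hq]; field_simp

lemma aux_stable {k : ℕ} {G : Type} (S : Finset (Fin k → G)) {δ : ℝ}
    (A : Finset G) (U : Finset (Fin k)) (hU : 2 ≤ U.card) (h : StableK δ S A) :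
    (1 - δ) * (A.card : ℝ) < (projCardIn (distinctPart S) U A : ℝ) := by
  by_contra hcon
  push Not at hcon
  obtain ⟨j, hj⟩ : U.Nonempty := Finset.card_pos.mp (by omega)
  set F := (distinctPart S).filter (fun x => ∀ j ∈ U, x j ∈ A) with hF
  set B := F.image (fun x => x j) with hB
  have hBc : B.card ≤ projCardIn (distinctPart S) U A := by
    have : B = (F.image (fun x => fun j : {a : Fin k // a ∈ U} => x j.1)).image
        (fun y => y ⟨j, hj⟩) := by
      rw [Finset.image_image]; rfl
    rw [this]
    exact Finset.card_image_le
  have hc : A.card ≤ (A \ B).card + B.card := by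
    have := Finset.le_card_sdiff B A
    omega
  have hc' : (A.card : ℝ) ≤ (A \ B).card + projCardIn (distinctPart S) U A := by
    exact_mod_cast hc.trans (by omega)
  obtain ⟨-, x, hx, hxA⟩ := h (A \ B) Finset.sdiff_subset (by linarith)
  refine (Finset.mem_sdiff.mp (hxA j)).2 ?_
  refine Finset.mem_image.mpr ⟨x, Finset.mem_filter.mpr ⟨hx, fun l _ => ?_⟩, rfl⟩
  exact (Finset.mem_sdiff.mp (hxA l)).1

/-- the 0-statement for configurations and large probabilities. -/
theorem stmt8 (k : ℕ) (hk : 2 ≤ k) (δ : ℝ) (hδ0 : 0 < δ) (hδ1 : δ < 1) :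
    ∃ c : ℝ, 0 < c ∧
      ∀ (G : ℕ → Type) [∀ i, Fintype (G i)]
        (S : ∀ i, Finset (Fin k → G i)),
      ∀ p : ℕ → ℝ, (∀ i, 0 ≤ p i ∧ p i ≤ 1) →
        Tendsto (fun i => p i * (Fintype.card (G i) : ℝ)) atTop atTop →
        Tendsto (fun i => p i * ((distinctPart (S i)).card : ℝ) ^ ((1:ℝ)/(k:ℝ)))
          atTop atTop →
        (∀ i, p i ≤ c * pStar (S i)) →
        Concentrated k G S p →
        Tendsto (fun i => binomProb (p i)
            (Finset.univ.filter (fun A : Finset (G i) => StableK δ (S i) A)))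
          atTop (nhds 0) := by
  refine ⟨(1 - δ) / 4, by linarith, ?_⟩
  intro G _ S p hp hG hS hle hconc
  rw [Metric.tendsto_atTop']
  have key : ∀ η : ℝ, 0 < η → ∀ᶠ i in atTop, binomProb (p i)
      (Finset.univ.filter (fun A : Finset (G i) => StableK δ (S i) A)) < η := by
    intro η hη
    obtain ⟨n₀, hn₀⟩ := hconc 1 (η / 2) one_pos (by linarith)
    have hexp : Tendsto (fun i => Real.exp (- (p i * (Fintype.card (G i) : ℝ)) / 10))
        atTop (nhds 0) := by
      refine Real.tendsto_exp_atBot.comp ?_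
      refine Tendsto.atBot_div_const (by norm_num) ?_
      exact tendsto_neg_atTop_atBot.comp hG
    filter_upwards [hexp.eventually (gt_mem_nhds (half_pos hη)), hG.eventually_ge_atTop (n₀ : ℝ),
      hS.eventually_gt_atTop 0] with i h1 h2 h3
    obtain ⟨hp0, hp1⟩ := hp i
    have hcard : n₀ ≤ Fintype.card (G i) := by
      have : p i * (Fintype.card (G i) : ℝ) ≤ Fintype.card (G i) :=
        mul_le_of_le_one_left (Nat.cast_nonneg _) hp1
      exact_mod_cast h2.trans this
    have hne : (distinctPart (S i)).Nonempty := by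
      rw [Finset.nonempty_iff_ne_empty]
      intro he
      rw [he, Finset.card_empty, Nat.cast_zero, Real.zero_rpow, mul_zero] at h3
      · exact lt_irrefl _ h3
      · have : (k : ℝ) ≠ 0 := by
          have : k ≠ 0 := by omega
          exact_mod_cast this
        exact one_div_ne_zero this
    obtain ⟨U, hU, hUle⟩ := aux_exists hk (S i) hne hp0 (by linarith) (by linarith) (hle i)
    have hc := hn₀ i hcard U hU
    have ht := aux_tail (G := G i) hp0 hp1
    have hsub := aux_mono (G := G i) hp0 hp1 (E := Finset.univ.filter
      (fun A : Finset (G i) => StableK δ (S i) A)) (F := Finset.univ.filter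
      (fun A : Finset (G i) =>
        1 * (p i) ^ U.card * (projCard (distinctPart (S i)) U : ℝ) ≤
          |(projCardIn (distinctPart (S i)) U A : ℝ) -
            (p i) ^ U.card * (projCard (distinctPart (S i)) U : ℝ)|))
      (H := Finset.univ.filter (fun A : Finset (G i) =>
        (A.card : ℝ) < p i * (Fintype.card (G i) : ℝ) / 2)) (by
        intro A hA
        have hst := aux_stable (S i) A U hU (Finset.mem_filter.mp hA).2
        rw [Finset.mem_union, Finset.mem_filter, Finset.mem_filter]
        by_cases hAc : (A.card : ℝ) < p i * (Fintype.card (G i) : ℝ) / 2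
        · exact Or.inr ⟨Finset.mem_univ _, hAc⟩
        · refine Or.inl ⟨Finset.mem_univ _, ?_⟩
          push Not at hAc
          refine le_trans ?_ (le_abs_self _)
          have : (1 - δ) * (p i * (Fintype.card (G i) : ℝ) / 2) ≤ (1 - δ) * A.card :=
            mul_le_mul_of_nonneg_left hAc (by linarith)
          linarith)
    linarith
  intro η hη
  obtain ⟨N, hN⟩ := eventually_atTop.mp (key η hη)
  refine ⟨N, fun i hi => ?_⟩
  rw [Real.dist_eq, sub_zero, abs_of_nonneg]
  · exact hN i hi.le
  · exact Finset.sum_nonneg fun A _ =>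
      mul_nonneg (pow_nonneg (hp i).1 _) (pow_nonneg (by linarith [(hp i).2]) _)
end

section
/- Let δ ∈ (0,1), k ≥ 2 and ρ > 0, and let {(S_i,G_i)}_{i≥1} be a sequence of systems of configurations of degree k such that every (S_i,G_i) is ρ-k-uniform. Set p_i = max over ℓ ∈ {2,…,k} of (α_ℓ^k(S_i,G_i)/α_1^k(S_i,G_i))^{1/(ℓ−1)}. Then there exists c > 0, depending only on δ, k and ρ, such that the following holds: if p(i) ∈ [0,1] is a sequence with p(i)·|G_i| → ∞ and p(i)·|S_i^{(k)}|^{1/k} → ∞, with p(i) ≤ c·p_i for all i, and the sequence {(S_i,G_i)} is concentrated for p, then P_{p(i)}({A ⊆ G_i : A is (δ,S_i)_k-stable}) → 0 as i → ∞. -/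
open Finset Filter Topology

attribute [local instance] Classical.propDecidable

/-- The restricted `ℓ`-th degree of freedom `α_ℓ^k(S,G)`. -/
noncomputable def alphaR {k : ℕ} {G : Type} [Fintype G] (S : Finset (Fin k → G)) (ℓ : ℕ) : ℕ :=
  (Finset.univ.filter fun U : Finset (Fin k) => U.card = ℓ).sup fun U =>
    Finset.univ.sup fun g : Fin k → G =>
      ((distinctPart S).filter fun x => ∀ j ∈ U, x j = g j).card

/-- `(S,G)` is `ρ-k`-uniform: for every `U` with `|U| ≥ 2`, all nonempty fibers of `π_U` on
`S^{(k)}` have size at least `ρ` times the maximal fiber size. -/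
def RhoUniform {k : ℕ} {G : Type} (ρ : ℝ) (S : Finset (Fin k → G)) : Prop :=
  ∀ U : Finset (Fin k), 2 ≤ U.card →
    ∀ x ∈ distinctPart S, ∀ y ∈ distinctPart S,
      ρ * (((distinctPart S).filter (fun z => ∀ j ∈ U, z j = y j)).card : ℝ)
        ≤ (((distinctPart S).filter (fun z => ∀ j ∈ U, z j = x j)).card : ℝ)

/-- The threshold quantity `max_{2 ≤ ℓ ≤ k} (α_ℓ^k / α_1^k)^{1/(ℓ-1)}`. -/
noncomputable def pMax {k : ℕ} {G : Type} [Fintype G] (S : Finset (Fin k → G)) : ℝ :=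
  sSup {x : ℝ | ∃ ℓ : ℕ, 2 ≤ ℓ ∧ ℓ ≤ k ∧
    x = ((alphaR S ℓ : ℝ) / (alphaR S 1 : ℝ)) ^ (1 / ((ℓ:ℝ) - 1))}

lemma binomProb_mono {G : Type} [Fintype G] {p : ℝ} (h0 : 0 ≤ p) (h1 : p ≤ 1)
    {E F : Finset (Finset G)} (h : E ⊆ F) : binomProb p E ≤ binomProb p F := by
  unfold binomProb
  apply Finset.sum_le_sum_of_subset_of_nonneg h
  intro A _ _
  have : 0 ≤ 1 - p := by linarith
  positivity

lemma binomProb_nonneg {G : Type} [Fintype G] {p : ℝ} (h0 : 0 ≤ p) (h1 : p ≤ 1)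
    (E : Finset (Finset G)) : 0 ≤ binomProb p E := by
  unfold binomProb
  apply Finset.sum_nonneg
  intro A _
  have : 0 ≤ 1 - p := by linarith
  positivity

lemma binomProb_union {G : Type} [Fintype G] {p : ℝ} (h0 : 0 ≤ p) (h1 : p ≤ 1)
    (E F : Finset (Finset G)) : binomProb p (E ∪ F) ≤ binomProb p E + binomProb p F := by
  have h := Finset.sum_union_inter (s₁ := E) (s₂ := F)
    (f := fun A : Finset G => p ^ A.card * (1 - p) ^ (Fintype.card G - A.card))
  have h2 := binomProb_nonneg h0 h1 (E ∩ F)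
  unfold binomProb at *
  linarith

lemma binom_variance {G : Type} [Fintype G] (p : ℝ) :
    ∑ A : Finset G, p ^ A.card * (1 - p) ^ (Fintype.card G - A.card) *
      (Fintype.card G * p - A.card) ^ 2 = Fintype.card G * p * (1 - p) := by
  set n := Fintype.card G with hn
  have h := congrArg (Polynomial.eval p) (bernsteinPolynomial.variance ℝ n)
  simp only [Polynomial.eval_finsetSum, bernsteinPolynomial] at h
  simp at h
  rw [← h, ← Finset.powerset_univ]
  rw [Finset.sum_powerset_apply_card
    (fun m => p ^ m * (1 - p) ^ (n - m) * ((n : ℝ) * p - m) ^ 2)]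
  rw [Finset.card_univ]
  apply Finset.sum_congr rfl
  intro m _
  simp only [nsmul_eq_mul]
  ring

lemma binom_chebyshev {G : Type} [Fintype G] {p : ℝ} (h0 : 0 ≤ p) (h1 : p ≤ 1)
    (hpos : 0 < p * Fintype.card G) :
    binomProb p (Finset.univ.filter (fun A : Finset G =>
      (A.card : ℝ) < p * Fintype.card G / 2)) ≤ 4 / (p * Fintype.card G) := by
  have hv := binom_variance (G := G) p
  set n : ℝ := (Fintype.card G : ℝ) with hn
  have hq : 0 ≤ 1 - p := by linarith
  have key : binomProb p (Finset.univ.filter (fun A : Finset G =>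
      (A.card : ℝ) < p * n / 2)) * (p * n / 2) ^ 2 ≤ n * p * (1 - p) := by
    rw [← hv]
    unfold binomProb
    rw [Finset.sum_mul]
    calc _ ≤ ∑ A ∈ (Finset.univ.filter (fun A : Finset G =>
      (A.card : ℝ) < p * n / 2)), p ^ A.card * (1 - p) ^ (Fintype.card G - A.card) *
        (n * p - A.card) ^ 2 := by
          apply Finset.sum_le_sum
          intro A hA
          have hA' := (Finset.mem_filter.1 hA).2
          apply mul_le_mul_of_nonneg_left _ (by positivity)
          apply pow_le_pow_left₀ (by positivity)
          linarith
      _ ≤ _ := by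
          apply Finset.sum_le_sum_of_subset_of_nonneg (Finset.subset_univ _)
          intro A _ _
          positivity
  rw [le_div_iff₀ hpos]
  have hsq : n * p * (1 - p) ≤ p * n := by nlinarith
  set B := binomProb p (Finset.univ.filter (fun A : Finset G => (A.card : ℝ) < p * n / 2))
  have : (B * (p * n)) * (p * n) ≤ 4 * (p * n) := by nlinarith
  exact le_of_mul_le_mul_right this hpos

lemma not_stable {k : ℕ} {G : Type} {δ : ℝ} (S : Finset (Fin k → G)) (U : Finset (Fin k))
    (hU : U.Nonempty) (A : Finset G)
    (h : (projCardIn (distinctPart S) U A : ℝ) ≤ (1 - δ) * A.card) : ¬ StableK δ S A := by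
  obtain ⟨u, hu⟩ := hU
  intro hs
  set F := (distinctPart S).filter (fun x => ∀ j ∈ U, x j ∈ A) with hF
  set B := F.image (fun x => x u) with hB
  have hBc : B.card ≤ projCardIn (distinctPart S) U A := by
    have : B = ((F.image (fun x => fun j : {a : Fin k // a ∈ U} => x j.1)).image
        (fun f => f ⟨u, hu⟩)) := by
      rw [Finset.image_image]; rfl
    rw [this]
    exact Finset.card_image_le
  have hc : A.card ≤ (A \ B).card + B.card := Finset.card_le_card_sdiff_add_card
  have hBc' : (B.card : ℝ) ≤ projCardIn (distinctPart S) U A := by exact_mod_cast hBc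
  have hc' : (A.card : ℝ) ≤ (A \ B).card + B.card := by exact_mod_cast hc
  obtain ⟨-, x, hx, hxm⟩ := hs (A \ B) Finset.sdiff_subset (by linarith)
  have h1 := Finset.mem_sdiff.1 (hxm u)
  apply h1.2
  rw [hB, Finset.mem_image]
  refine ⟨x, ?_, rfl⟩
  rw [hF, Finset.mem_filter]
  exact ⟨hx, fun j _ => (Finset.mem_sdiff.1 (hxm j)).1⟩

lemma fiber_le_alpha {k : ℕ} {G : Type} [Fintype G] (S : Finset (Fin k → G))
    (U : Finset (Fin k)) (ℓ : ℕ) (hU : U.card = ℓ) (g : Fin k → G) :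
    ((distinctPart S).filter fun x : Fin k → G => ∀ j ∈ U, x j = g j).card ≤ alphaR S ℓ := by
  have h1 : U ∈ (Finset.univ.filter fun U : Finset (Fin k) => U.card = ℓ) :=
    Finset.mem_filter.2 ⟨Finset.mem_univ _, hU⟩
  unfold alphaR
  refine le_trans ?_ (Finset.le_sup h1)
  exact Finset.le_sup (f := fun g : Fin k → G =>
    ((distinctPart S).filter fun x : Fin k → G => ∀ j ∈ U, x j = g j).card) (Finset.mem_univ g)

lemma card_le_alpha_one {k : ℕ} (hk : 2 ≤ k) {G : Type} [Fintype G] (S : Finset (Fin k → G)) :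
    (distinctPart S).card ≤ alphaR S 1 * Fintype.card G := by
  let z : Fin k := ⟨0, by omega⟩
  rw [← Finset.card_univ]
  apply Finset.card_le_mul_card_image_of_maps_to (f := fun x : Fin k → G => x z)
    (fun x _ => Finset.mem_univ _)
  intro g _
  refine le_trans ?_ (fiber_le_alpha S {z} 1 (Finset.card_singleton z) (fun _ => g))
  apply Finset.card_le_card
  intro x hx
  rw [Finset.mem_filter] at hx ⊢
  refine ⟨hx.1, fun j hj => ?_⟩
  rw [Finset.mem_singleton.1 hj]
  exact hx.2

lemma exists_U {k : ℕ} {G : Type} [Fintype G] {ρ : ℝ} (S : Finset (Fin k → G))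
    (hS : (distinctPart S).Nonempty) (hunif : RhoUniform ρ S) (ℓ : ℕ) (h2 : 2 ≤ ℓ) (hl : ℓ ≤ k) :
    0 < alphaR S ℓ ∧ ∃ U : Finset (Fin k), U.card = ℓ ∧
      (projCard (distinctPart S) U : ℝ) * (ρ * alphaR S ℓ) ≤ (distinctPart S).card := by
  obtain ⟨s, hs⟩ := hS
  have hne : (Finset.univ.filter fun U : Finset (Fin k) => U.card = ℓ).Nonempty := by
    obtain ⟨U, _, hU⟩ := Finset.exists_subset_card_eq (s := (Finset.univ : Finset (Fin k)))
      (n := ℓ) (by simpa using hl)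
    exact ⟨U, by simp [hU]⟩
  obtain ⟨U, hU, hUe⟩ := Finset.exists_mem_eq_sup _ hne (fun U => Finset.univ.sup
    fun g : Fin k → G => ((distinctPart S).filter fun x : Fin k → G => ∀ j ∈ U, x j = g j).card)
  obtain ⟨g, _, hge⟩ := Finset.exists_mem_eq_sup (Finset.univ : Finset (Fin k → G)) ⟨s, by simp⟩
    (fun g : Fin k → G => ((distinctPart S).filter fun x : Fin k → G => ∀ j ∈ U, x j = g j).card)
  have hal : alphaR S ℓ = ((distinctPart S).filter fun x : Fin k → G => ∀ j ∈ U, x j = g j).card :=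
    hUe.trans hge
  have hpos : 0 < alphaR S ℓ := by
    have : ((distinctPart S).filter fun x : Fin k → G => ∀ j ∈ U, x j = s j).card ≤ alphaR S ℓ := by
      exact fiber_le_alpha S U ℓ (by simpa using hU) s
    refine lt_of_lt_of_le ?_ this
    rw [Finset.card_pos]
    exact ⟨s, by simp [hs]⟩
  refine ⟨hpos, U, by simpa using hU, ?_⟩
  have hUc : U.card = ℓ := by simpa using hU
  obtain ⟨y, hy⟩ := Finset.card_pos.1 (hal ▸ hpos)
  rw [Finset.mem_filter] at hy
  have hgy : ((distinctPart S).filter fun x : Fin k → G => ∀ j ∈ U, x j = g j) =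
      ((distinctPart S).filter fun x : Fin k → G => ∀ j ∈ U, x j = y j) := by
    apply Finset.filter_congr
    intro x _
    exact forall₂_congr fun j hj => by rw [hy.2 j hj]
  rw [hgy] at hal
  have hfib : ∀ x ∈ distinctPart S, ρ * (alphaR S ℓ : ℝ) ≤
      (((distinctPart S).filter (fun z => ∀ j ∈ U, z j = x j)).card : ℝ) := by
    intro x hx
    rw [hal]
    exact hunif U (by omega) x hx y hy.1
  have hsum := Finset.card_eq_sum_card_image
    (fun x : Fin k → G => fun j : {a : Fin k // a ∈ U} => x j.1) (distinctPart S)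
  rw [hsum]
  push_cast
  unfold projCard
  rw [← nsmul_eq_mul]
  apply Finset.card_nsmul_le_sum
  intro f hf
  obtain ⟨x, hx, rfl⟩ := Finset.mem_image.1 hf
  refine (hfib x hx).trans ?_
  norm_cast
  apply Finset.card_le_card
  intro z hz
  rw [Finset.mem_filter] at hz ⊢
  exact ⟨hz.1, funext fun j => hz.2 j.1 j.2⟩

lemma exists_pMax {k : ℕ} (hk : 2 ≤ k) {G : Type} [Fintype G] (S : Finset (Fin k → G)) :
    ∃ ℓ : ℕ, 2 ≤ ℓ ∧ ℓ ≤ k ∧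
    pMax S = ((alphaR S ℓ : ℝ) / (alphaR S 1 : ℝ)) ^ (1 / ((ℓ:ℝ) - 1)) := by
  unfold pMax
  set T := {x : ℝ | ∃ ℓ : ℕ, 2 ≤ ℓ ∧ ℓ ≤ k ∧
    x = ((alphaR S ℓ : ℝ) / (alphaR S 1 : ℝ)) ^ (1 / ((ℓ:ℝ) - 1))} with hT
  have hne : T.Nonempty := ⟨_, 2, le_refl _, hk, rfl⟩
  have hfin : T.Finite := by
    apply ((Finset.Icc 2 k).finite_toSet.image
      (fun ℓ : ℕ => ((alphaR S ℓ : ℝ) / (alphaR S 1 : ℝ)) ^ (1 / ((ℓ:ℝ) - 1)))).subset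
    rintro x ⟨ℓ, h2, hl, rfl⟩
    exact ⟨ℓ, by simp [h2, hl], rfl⟩
  exact hne.csSup_mem hfin

lemma exists_good_U {k : ℕ} (hk : 2 ≤ k) {G : Type} [Fintype G] {ρ c p : ℝ} (hρ : 0 < ρ)
    (hc0 : 0 < c) (hc1 : c ≤ 1) (S : Finset (Fin k → G))
    (hS : (distinctPart S).Nonempty) (hunif : RhoUniform ρ S)
    (hp0 : 0 ≤ p) (hp : p ≤ c * pMax S) :
    ∃ U : Finset (Fin k), 2 ≤ U.card ∧
      p ^ U.card * (projCard (distinctPart S) U : ℝ) * ρ ≤ c * (p * Fintype.card G) := by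
  obtain ⟨ℓ, h2, hl, hpm⟩ := exists_pMax hk S
  obtain ⟨hpos, U, hUc, hU⟩ := exists_U S hS hunif ℓ h2 hl
  refine ⟨U, by omega, ?_⟩
  rw [hUc]
  have h1 := card_le_alpha_one hk S
  have h1' : ((distinctPart S).card : ℝ) ≤ alphaR S 1 * Fintype.card G := by exact_mod_cast h1
  have ha1 : 0 < alphaR S 1 := by
    by_contra h
    have h : alphaR S 1 = 0 := by omega
    rw [h] at h1
    have := Finset.card_pos.2 hS
    omega
  have ha1' : (0:ℝ) < alphaR S 1 := by exact_mod_cast ha1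
  have hal : (0:ℝ) < alphaR S ℓ := by exact_mod_cast hpos
  have hpow : p ^ (ℓ - 1) ≤ c * ((alphaR S ℓ : ℝ) / alphaR S 1) := by
    have hr : (0:ℝ) ≤ (alphaR S ℓ : ℝ) / alphaR S 1 := by positivity
    have e : (1 / ((ℓ:ℝ) - 1)) = (((ℓ - 1 : ℕ) : ℝ))⁻¹ := by
      rw [Nat.cast_sub (by omega)]; simp
    calc p ^ (ℓ - 1) ≤ (c * pMax S) ^ (ℓ - 1) := pow_le_pow_left₀ hp0 hp _
      _ = c ^ (ℓ - 1) * ((alphaR S ℓ : ℝ) / alphaR S 1) := by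
          rw [mul_pow, hpm, e, Real.rpow_inv_natCast_pow hr (by omega)]
      _ ≤ _ := by
          apply mul_le_mul_of_nonneg_right _ hr
          exact pow_le_of_le_one hc0.le hc1 (by omega)
  have hpow' : p ^ (ℓ - 1) * alphaR S 1 ≤ c * alphaR S ℓ := by
    rw [← mul_div_assoc, le_div_iff₀ ha1'] at hpow
    exact hpow
  have epow : p ^ ℓ = p * p ^ (ℓ - 1) := by
    rw [← pow_succ']; congr 1; omega
  apply le_of_mul_le_mul_right _ hal
  set P : ℝ := (projCard (distinctPart S) U : ℝ)
  set n : ℝ := (Fintype.card G : ℝ)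
  have hn : 0 ≤ n := by positivity
  calc p ^ ℓ * P * ρ * alphaR S ℓ = p ^ ℓ * (P * (ρ * alphaR S ℓ)) := by ring
    _ ≤ p ^ ℓ * (alphaR S 1 * n) := by
        apply mul_le_mul_of_nonneg_left (hU.trans h1') (by positivity)
    _ = (p ^ (ℓ - 1) * alphaR S 1) * (p * n) := by rw [epow]; ring
    _ ≤ (c * alphaR S ℓ) * (p * n) := mul_le_mul_of_nonneg_right hpow' (by positivity)
    _ = _ := by ring


/-- the 0-statement for `ρ-k`-uniform sequences of configuration systems. -/
theorem stmt9 (k : ℕ) (hk : 2 ≤ k) (δ : ℝ) (hδ0 : 0 < δ) (hδ1 : δ < 1)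
    (ρ : ℝ) (hρ : 0 < ρ) :
    ∃ c : ℝ, 0 < c ∧
      ∀ (G : ℕ → Type) [∀ i, Fintype (G i)]
        (S : ∀ i, Finset (Fin k → G i)),
      (∀ i, RhoUniform ρ (S i)) →
      ∀ p : ℕ → ℝ, (∀ i, 0 ≤ p i ∧ p i ≤ 1) →
        Tendsto (fun i => p i * (Fintype.card (G i) : ℝ)) atTop atTop →
        Tendsto (fun i => p i * ((distinctPart (S i)).card : ℝ) ^ ((1:ℝ)/(k:ℝ)))
          atTop atTop →
        (∀ i, p i ≤ c * pMax (S i)) →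
        Concentrated k G S p →
        Tendsto (fun i => binomProb (p i)
            (Finset.univ.filter (fun A : Finset (G i) => StableK δ (S i) A)))
          atTop (nhds 0) := by
  have hd : 0 < 1 - δ := by linarith
  refine ⟨min 1 (ρ * (1 - δ) / 4), by positivity, ?_⟩
  intro G _ S hunif p hp hpG hpS hpc hconc
  set c := min 1 (ρ * (1 - δ) / 4) with hc
  have hc0 : 0 < c := by positivity
  have hc1 : c ≤ 1 := min_le_left _ _
  have hc2 : c ≤ ρ * (1 - δ) / 4 := min_le_right _ _
  rw [Metric.tendsto_atTop']
  intro η hη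
  obtain ⟨n₀, hn₀⟩ := hconc 1 (η / 2) one_pos (by positivity)
  have ev1 := hpG.eventually_gt_atTop (max (n₀ : ℝ) (8 / η))
  have ev2 := hpS.eventually_gt_atTop 0
  obtain ⟨N, hN⟩ := Filter.eventually_atTop.1 (ev1.and ev2)
  refine ⟨N, fun i hi => ?_⟩
  obtain ⟨h1, h2⟩ := hN i hi.le
  obtain ⟨hp0, hp1⟩ := hp i
  have h3 := (le_max_left _ _).trans_lt h1
  have h4 := (le_max_right _ _).trans_lt h1
  have hpn : 0 < p i * Fintype.card (G i) := lt_of_le_of_lt (by positivity) h4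
  have hcard : n₀ ≤ Fintype.card (G i) := by
    have hnn : (0 : ℝ) ≤ Fintype.card (G i) := by positivity
    have : (n₀ : ℝ) ≤ Fintype.card (G i) := by nlinarith
    exact_mod_cast this
  have hS : (distinctPart (S i)).Nonempty := by
    rw [Finset.nonempty_iff_ne_empty]
    intro h
    rw [h] at h2
    have hk0 : (1:ℝ) / (k:ℝ) ≠ 0 := by positivity
    rw [Finset.card_empty, Nat.cast_zero, Real.zero_rpow hk0] at h2
    simp at h2
  obtain ⟨U, hU2, hU⟩ := exists_good_U hk hρ hc0 hc1 (S i) hS (hunif i) hp0 (hpc i)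
  have hA := hn₀ i hcard U hU2
  have hB := binom_chebyshev (G := G i) hp0 hp1 hpn
  have hsub : (Finset.univ.filter (fun A : Finset (G i) => StableK δ (S i) A)) ⊆
      (Finset.univ.filter (fun A : Finset (G i) =>
        1 * (p i) ^ U.card * (projCard (distinctPart (S i)) U : ℝ) ≤
          |(projCardIn (distinctPart (S i)) U A : ℝ) -
            (p i) ^ U.card * (projCard (distinctPart (S i)) U : ℝ)|)) ∪
      (Finset.univ.filter (fun A : Finset (G i) =>
        (A.card : ℝ) < p i * Fintype.card (G i) / 2)) := by
    intro A hAs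
    have hst := (Finset.mem_filter.1 hAs).2
    by_contra hcon
    simp only [Finset.mem_union, Finset.mem_filter, Finset.mem_univ, true_and, not_or,
      not_le, not_lt, one_mul] at hcon
    obtain ⟨hc3, hc4⟩ := hcon
    refine not_stable (S i) U (Finset.card_pos.1 (by omega)) A ?_ hst
    have h5 := (abs_lt.1 hc3).2
    set Q := (p i) ^ U.card * (projCard (distinctPart (S i)) U : ℝ)
    have h6 : Q * ρ ≤ (ρ * (1 - δ) / 4) * (p i * Fintype.card (G i)) :=
      hU.trans (mul_le_mul_of_nonneg_right hc2 hpn.le)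
    have h7 : Q ≤ (1 - δ) / 4 * (p i * Fintype.card (G i)) := by
      apply le_of_mul_le_mul_right _ hρ
      linarith
    have h8 := mul_le_mul_of_nonneg_left hc4 hd.le
    linarith
  have hle := (binomProb_mono hp0 hp1 hsub).trans (binomProb_union hp0 hp1 _ _)
  have hnn := binomProb_nonneg hp0 hp1
    (Finset.univ.filter (fun A : Finset (G i) => StableK δ (S i) A))
  have h9 : 4 / (p i * Fintype.card (G i)) < η / 2 := by
    rw [div_lt_iff₀ hη] at h4
    rw [div_lt_iff₀ hpn]
    linarith
  rw [Real.dist_eq, sub_zero, abs_of_nonneg hnn]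
  linarith
end

section
/- Let k ≥ 2 and let {(S_i,G_i)}_{i≥1} be a normal sequence of systems of configurations of degree k arising from invariant group homomorphisms on finite abelian groups. Let p(i) ∈ [0,1] be a sequence with p(i)·|G_i| → ∞ and p(i)·|π_U(S_i)|^{1/|U|} → ∞ for every U ⊆ {1,…,k} with |U| ≥ 2. Then the sequence is concentrated for p: for all ε, ε' > 0 there exists n₀ such that for every i with |G_i| ≥ n₀ and every U ⊆ {1,…,k} with |U| ≥ 2, P_{p(i)}({A ⊆ G_i : | |π_U(S_i^{(k)}) ∩ A^{|U|}| − p(i)^{|U|}·|π_U(S_i^{(k)})| | ≥ ε·p(i)^{|U|}·|π_U(S_i^{(k)})|}) ≤ ε'. -/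
open Finset Filter Topology

attribute [local instance] Classical.propDecidable

/-- A sequence of configuration systems of degree `k` is normal with function `γ`. -/
def NormalSeq (k : ℕ) (G : ℕ → Type) [∀ i, Fintype (G i)]
    (S : ∀ i, Finset (Fin k → G i)) (γ : ℝ → ℝ) : Prop :=
  Tendsto (fun i => (Fintype.card (G i) : ℝ)) atTop atTop ∧
  Tendsto (fun i => (Fintype.card (G i) : ℝ) / ((S i).card : ℝ)) atTop (nhds 0) ∧
  Tendsto (fun i => (Fintype.card (G i) : ℝ) ^ k / ((S i).card : ℝ)) atTop atTop ∧
  Tendsto (fun i => ((distinctPart (S i)).card : ℝ) / ((S i).card : ℝ)) atTop (nhds 1) ∧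
  (∀ ε : ℝ, 0 < ε → ε < 1 → 0 < γ ε ∧ γ ε < 1) ∧
  (∀ ε : ℝ, 0 < ε → ε < 1 → ∀ i, ∀ X : Finset (G i),
    ε * (Fintype.card (G i) : ℝ) ≤ (X.card : ℝ) →
    γ ε * ((S i).card : ℝ) ≤ (((S i).filter (fun x => ∀ j, x j ∈ X)).card : ℝ))


lemma sup_prob {G : Type} [Fintype G] (p : ℝ) (B : Finset G) :
    ∑ A : Finset G, (p ^ A.card * (1 - p) ^ (Fintype.card G - A.card)) *
      (if B ⊆ A then 1 else 0) = p ^ B.card := by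
  have h := Finset.prod_add (fun _ : G => p) (fun i => if i ∈ B then 0 else 1 - p) Finset.univ
  have h1 : ∏ i : G, (p + (if i ∈ B then 0 else 1 - p)) = p ^ B.card := by
    have : ∀ i : G, (p + (if i ∈ B then 0 else 1 - p)) = if i ∈ B then p else 1 := by
      intro i; split_ifs <;> ring
    rw [Finset.prod_congr rfl (fun i _ => this i), Finset.prod_ite]
    simp
  rw [← h1, h, Finset.powerset_univ]
  refine Finset.sum_congr rfl fun A _ => ?_
  rw [mul_assoc, Finset.prod_const]
  congr 1
  split_ifs with hB
  · rw [mul_one, ← Finset.card_univ, ← Finset.card_sdiff_of_subset (Finset.subset_univ A),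
      ← Finset.prod_const]
    refine Finset.prod_congr rfl fun i hi => ?_
    rw [if_neg]
    intro h; exact (Finset.mem_sdiff.1 hi).2 (hB h)
  · obtain ⟨b, hb, hbA⟩ := Finset.not_subset.1 hB
    rw [mul_zero, eq_comm]
    exact Finset.prod_eq_zero (i := b) (by simp [hbA]) (by simp [hb])

lemma fiber_bound {α β : Type} [DecidableEq β] [AddCommGroup α] [AddCommGroup β] (H : Finset α)
    (hH : ∀ a ∈ H, ∀ b ∈ H, ∀ c ∈ H, a - b + c ∈ H) (f : α →+ β) (v : β) :
    (H.filter (fun x => f x = v)).card * (H.image f).card ≤ H.card := by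
  rcases (H.filter (fun x => f x = v)).eq_empty_or_nonempty with h0 | ⟨x0, hx0⟩
  · simp [h0]
  rw [Finset.mem_filter] at hx0
  rw [Finset.card_eq_sum_card_image f H, mul_comm, ← smul_eq_mul]
  refine Finset.card_nsmul_le_sum _ _ _ fun b hb => ?_
  obtain ⟨y, hy, rfl⟩ := Finset.mem_image.1 hb
  refine Finset.card_le_card_of_injOn (fun x => x - x0 + y) ?_ ?_
  · intro x hx
    simp only [Finset.coe_filter, Set.mem_ofPred_eq] at hx ⊢
    exact ⟨hH _ hx.1 _ hx0.1 _ hy, by simp [hx.2, hx0.2]⟩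
  · intro a _ b _ h
    simpa using h

def restr {ι G : Type} [AddCommGroup G] (W : Finset ι) : (ι → G) →+ ({a // a ∈ W} → G) where
  toFun x := fun j => x j.1
  map_zero' := rfl
  map_add' _ _ := rfl

lemma card_match {ι G : Type} [Fintype ι] [AddCommGroup G] (H T : Finset (ι → G))
    (hH : ∀ a ∈ H, ∀ b ∈ H, ∀ c ∈ H, a - b + c ∈ H) (hTH : T ⊆ H) (t : ι → G) (W : Finset ι) :
    (T.filter (fun s => ∀ j ∈ W, s j ∈ Finset.univ.image t)).card * (H.image (restr W)).card
      ≤ Fintype.card ι ^ Fintype.card ι * H.card := by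
  have h1 : T.filter (fun s => ∀ j ∈ W, s j ∈ Finset.univ.image t) ⊆
      (Finset.univ : Finset (ι → ι)).biUnion
        (fun τ => H.filter (fun x => restr W x = fun j => t (τ j.1))) := by
    intro s hs
    rw [Finset.mem_filter] at hs
    have : ∀ j, ∃ l, j ∈ W → t l = s j := by
      intro j
      by_cases hj : j ∈ W
      · obtain ⟨l, _, hl⟩ := Finset.mem_image.1 (hs.2 j hj)
        exact ⟨l, fun _ => hl⟩
      · exact ⟨j, fun h => absurd h hj⟩
    choose τ hτ using this
    rw [Finset.mem_biUnion]
    refine ⟨τ, Finset.mem_univ _, Finset.mem_filter.2 ⟨hTH hs.1, ?_⟩⟩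
    funext j
    exact (hτ j.1 j.2).symm
  calc _ ≤ (∑ τ : ι → ι, (H.filter (fun x => restr W x = fun j => t (τ j.1))).card) *
        (H.image (restr W)).card :=
        Nat.mul_le_mul_right _ ((Finset.card_le_card h1).trans Finset.card_biUnion_le)
    _ = ∑ τ : ι → ι, (H.filter (fun x => restr W x = fun j => t (τ j.1))).card *
        (H.image (restr W)).card := by rw [Finset.sum_mul]
    _ ≤ ∑ τ : ι → ι, H.card := Finset.sum_le_sum fun τ _ => by
        have := fiber_bound H hH (restr W) (fun j => t (τ j.1))
        convert this using 1
    _ = _ := by simp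

lemma var_bound {ι G : Type} [Fintype ι] [AddCommGroup G] (H T : Finset (ι → G))
    (hH : ∀ a ∈ H, ∀ b ∈ H, ∀ c ∈ H, a - b + c ∈ H) (hTH : T ⊆ H)
    (hT : ∀ t ∈ T, Function.Injective t) (hHT : H.card ≤ 2 * T.card)
    (p L : ℝ) (hp : 0 < p) (hL : 0 < L)
    (hW : ∀ W : Finset ι, W.Nonempty → L ≤ p ^ W.card * ((H.image (restr W)).card : ℝ)) :
    ∑ t ∈ T, ∑ s ∈ T, (p ^ (Finset.univ.image t ∪ Finset.univ.image s).card
        - p ^ (2 * Fintype.card ι)) ≤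
      (2 ^ Fintype.card ι * (Fintype.card ι) ^ (Fintype.card ι) * 2 / L) *
        (p ^ (Fintype.card ι) * T.card) ^ 2 := by
  set u := Fintype.card ι with hu
  have hmain : ∀ t ∈ T, ∑ s ∈ T, (p ^ (Finset.univ.image t ∪ Finset.univ.image s).card
        - p ^ (2 * u)) ≤ 2 ^ u * ((u:ℝ) ^ u * (2 * T.card) * p ^ (2 * u) / L) := by
    intro t ht
    calc _ ≤ ∑ s ∈ T, ∑ W : Finset ι, (if W.Nonempty ∧ ∀ j ∈ W, s j ∈ Finset.univ.image t then
            p ^ (2 * u - W.card) else 0) := by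
          refine Finset.sum_le_sum fun s hs => ?_
          set W0 : Finset ι := Finset.univ.filter (fun j => s j ∈ Finset.univ.image t) with hW0
          have hint : (Finset.univ.image t ∩ Finset.univ.image s) = W0.image s := by
            ext x
            simp only [hW0, Finset.mem_inter, Finset.mem_image, Finset.mem_univ, true_and,
              Finset.mem_filter]
            constructor
            · rintro ⟨⟨a, rfl⟩, ⟨b, hb⟩⟩
              exact ⟨b, ⟨a, hb.symm⟩, hb⟩
            · rintro ⟨b, ⟨a, ha⟩, rfl⟩
              exact ⟨⟨a, ha⟩, ⟨b, rfl⟩⟩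
          have hc := Finset.card_union_add_card_inter (Finset.univ.image t) (Finset.univ.image s)
          rw [hint, Finset.card_image_of_injective _ (hT s hs),
            Finset.card_image_of_injective _ (hT s hs),
            Finset.card_image_of_injective _ (hT t ht), Finset.card_univ, ← hu] at hc
          have hcard : (Finset.univ.image t ∪ Finset.univ.image s).card = 2 * u - W0.card := by
            omega
          have hnn : ∀ W ∈ (Finset.univ : Finset (Finset ι)),
              0 ≤ (if W.Nonempty ∧ ∀ j ∈ W, s j ∈ Finset.univ.image t then
                p ^ (2 * u - W.card) else 0) := by
            intro W _
            split_ifs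
            · positivity
            · exact le_rfl
          rw [hcard]
          by_cases hne : W0.Nonempty
          · refine le_trans ?_ (Finset.single_le_sum hnn (Finset.mem_univ W0))
            rw [if_pos ⟨hne, fun j hj => (Finset.mem_filter.1 hj).2⟩]
            have : 0 ≤ p ^ (2 * u) := by positivity
            linarith
          · rw [Finset.not_nonempty_iff_eq_empty] at hne
            rw [hne]
            simpa using Finset.sum_nonneg hnn
      _ = ∑ W : Finset ι, ∑ s ∈ T, (if W.Nonempty ∧ ∀ j ∈ W, s j ∈ Finset.univ.image t then
            p ^ (2 * u - W.card) else 0) := Finset.sum_comm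
      _ ≤ ∑ W : Finset ι, ((u:ℝ) ^ u * (2 * T.card) * p ^ (2 * u) / L) := by
          refine Finset.sum_le_sum fun W _ => ?_
          by_cases hne : W.Nonempty
          swap
          · simp only [hne, false_and, if_false, Finset.sum_const_zero]
            positivity
          simp only [hne, true_and]
          rw [← Finset.sum_filter, Finset.sum_const, nsmul_eq_mul, le_div_iff₀ hL]
          have h1 := card_match H T hH hTH t W
          rw [← hu] at h1
          have h2 : (((T.filter (fun s => ∀ j ∈ W, s j ∈ Finset.univ.image t)).card : ℝ) *
            ((H.image (restr W)).card : ℝ)) ≤ (u:ℝ) ^ u * (2 * T.card) := by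
            exact_mod_cast h1.trans (Nat.mul_le_mul_left _ hHT)
          have h3 := hW W hne
          have hle : W.card ≤ 2 * u := by
            have := Finset.card_le_univ W
            omega
          have h4 : p ^ (2 * u) = p ^ (2 * u - W.card) * p ^ W.card := by
            rw [← pow_add]; congr 1; omega
          set c : ℝ := ((T.filter (fun s => ∀ j ∈ W, s j ∈ Finset.univ.image t)).card : ℝ)
          have hc : 0 ≤ c := Nat.cast_nonneg _
          calc c * p ^ (2 * u - W.card) * L
              ≤ c * p ^ (2 * u - W.card) * (p ^ W.card * ((H.image (restr W)).card : ℝ)) := by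
                gcongr
            _ = (c * ((H.image (restr W)).card : ℝ)) * p ^ (2 * u) := by rw [h4]; ring
            _ ≤ _ := by gcongr
      _ = _ := by
          rw [Finset.sum_const, Finset.card_univ, Fintype.card_finset, nsmul_eq_mul, ← hu]
          push_cast; ring
  calc _ ≤ ∑ t ∈ T, 2 ^ u * ((u:ℝ) ^ u * (2 * T.card) * p ^ (2 * u) / L) :=
        Finset.sum_le_sum hmain
    _ = _ := by
        rw [Finset.sum_const, nsmul_eq_mul]
        ring

lemma cheb {ι G : Type} [Fintype ι] [Fintype G] [AddCommGroup G] (H T : Finset (ι → G))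
    (hH : ∀ a ∈ H, ∀ b ∈ H, ∀ c ∈ H, a - b + c ∈ H) (hTH : T ⊆ H)
    (hT : ∀ t ∈ T, Function.Injective t) (hHT : H.card ≤ 2 * T.card) (hT0 : T.Nonempty)
    (p L ε : ℝ) (hp : 0 < p) (hp1 : p ≤ 1) (hL : 0 < L) (hε : 0 < ε)
    (hW : ∀ W : Finset ι, W.Nonempty → L ≤ p ^ W.card * ((H.image (restr W)).card : ℝ)) :
    binomProb p (Finset.univ.filter (fun A : Finset G =>
          ε * p ^ Fintype.card ι * (T.card : ℝ) ≤
            |((T.filter (fun t => ∀ j, t j ∈ A)).card : ℝ) - p ^ Fintype.card ι * (T.card : ℝ)|))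
      ≤ (2 ^ Fintype.card ι * (Fintype.card ι) ^ (Fintype.card ι) * 2 / L) / ε ^ 2 := by
  set u := Fintype.card ι with hu
  set μ : ℝ := p ^ u * (T.card : ℝ) with hμ
  have hTc : (0:ℝ) < T.card := by exact_mod_cast hT0.card_pos
  have hμ0 : 0 < μ := by positivity
  set w : Finset G → ℝ := fun A => p ^ A.card * (1 - p) ^ (Fintype.card G - A.card) with hw
  have hw0 : ∀ A, 0 ≤ w A := fun A =>
    mul_nonneg (pow_nonneg hp.le _) (pow_nonneg (by linarith) _)
  set X : Finset G → ℝ := fun A => ((T.filter (fun t => ∀ j, t j ∈ A)).card : ℝ) with hX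
  have hXe : ∀ A, X A = ∑ t ∈ T, if Finset.univ.image t ⊆ A then 1 else 0 := by
    intro A
    simp only [hX, Finset.card_filter]
    push_cast
    refine Finset.sum_congr rfl fun t _ => ?_
    congr 1
    simp [Finset.image_subset_iff]
  have hX2 : ∀ A, X A ^ 2 = ∑ t ∈ T, ∑ s ∈ T,
      if Finset.univ.image t ∪ Finset.univ.image s ⊆ A then 1 else 0 := by
    intro A
    rw [hXe, sq, Finset.sum_mul_sum]
    refine Finset.sum_congr rfl fun t _ => Finset.sum_congr rfl fun s _ => ?_
    simp only [Finset.union_subset_iff]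
    split_ifs <;> simp_all
  have e0 : ∑ A : Finset G, w A = 1 := by
    have := sup_prob p (∅ : Finset G)
    simpa using this
  have e1 : ∑ A : Finset G, w A * X A = μ := by
    simp only [hXe, Finset.mul_sum]
    rw [Finset.sum_comm]
    rw [Finset.sum_congr rfl (fun t _ => sup_prob p (Finset.univ.image t))]
    rw [Finset.sum_congr rfl (fun t ht => by
      rw [Finset.card_image_of_injective _ (hT t ht), Finset.card_univ, ← hu])]
    rw [Finset.sum_const, nsmul_eq_mul, mul_comm]
  have e2 : ∑ A : Finset G, w A * X A ^ 2 =
      ∑ t ∈ T, ∑ s ∈ T, p ^ (Finset.univ.image t ∪ Finset.univ.image s).card := by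
    simp only [hX2, Finset.mul_sum]
    rw [Finset.sum_comm]
    refine Finset.sum_congr rfl fun t _ => ?_
    rw [Finset.sum_comm]
    exact Finset.sum_congr rfl fun s _ => sup_prob p _
  have hv := var_bound H T hH hTH hT hHT p L hp hL hW
  rw [← hu, ← hμ] at hv
  have hvar : ∑ A : Finset G, w A * (X A - μ) ^ 2 ≤ (2 ^ u * (u:ℝ) ^ u * 2 / L) * μ ^ 2 := by
    refine le_trans (le_of_eq ?_) hv
    have : ∀ A, w A * (X A - μ) ^ 2 = w A * X A ^ 2 - 2 * μ * (w A * X A) + μ ^ 2 * w A := by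
      intro A; ring
    simp only [this, Finset.sum_add_distrib, Finset.sum_sub_distrib, ← Finset.mul_sum, e0, e1, e2]
    simp only [Finset.sum_const, nsmul_eq_mul]
    rw [hμ]; ring
  have hlow : (ε * μ) ^ 2 * binomProb p (Finset.univ.filter (fun A : Finset G =>
      ε * p ^ u * (T.card : ℝ) ≤ |X A - μ|)) ≤ ∑ A : Finset G, w A * (X A - μ) ^ 2 := by
    unfold binomProb
    rw [Finset.mul_sum]
    refine le_trans (Finset.sum_le_sum (g := fun A => w A * (X A - μ) ^ 2) ?_)
      (Finset.sum_le_sum_of_subset_of_nonneg (Finset.subset_univ _)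
        (fun A _ _ => mul_nonneg (hw0 A) (sq_nonneg _)))
    intro A hA
    have hA := (Finset.mem_filter.1 hA).2
    rw [mul_comm]
    refine mul_le_mul_of_nonneg_left ?_ (hw0 A)
    rw [← sq_abs (X A - μ)]
    refine pow_le_pow_left₀ (by positivity) ?_ 2
    rw [hμ, ← mul_assoc]; exact hA
  rw [le_div_iff₀ (by positivity)]
  have hfin := hlow.trans hvar
  have hμ2 : 0 < μ ^ 2 := by positivity
  refine le_of_mul_le_mul_right ?_ hμ2
  refine le_trans (le_of_eq ?_) hfin
  ring

lemma proj_eq {k : ℕ} {G : Type} [AddCommGroup G] (S : Finset (Fin k → G)) (U : Finset (Fin k))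
    (W : Finset {a : Fin k // a ∈ U}) :
    ((S.image (restr U)).image (restr W)).card = projCard S (W.map (Function.Embedding.subtype _)) := by
  rw [Finset.image_image]
  unfold projCard
  set V := W.map (Function.Embedding.subtype (fun a => a ∈ U)) with hV
  have hmem : ∀ j : {a // a ∈ W}, j.1.1 ∈ V := fun j => Finset.mem_map_of_mem _ j.2
  let φ : ({a // a ∈ V} → G) → ({a // a ∈ W} → G) := fun y j => y ⟨j.1.1, hmem j⟩
  have hφ : Function.Injective φ := by
    intro y z h
    funext ⟨a, ha⟩
    obtain ⟨b, hb, rfl⟩ := Finset.mem_map.1 ha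
    exact congrFun h ⟨b, hb⟩
  rw [← Finset.card_image_of_injective _ hφ, Finset.image_image]
  rfl

/-- concentration for normal sequences arising from invariant homomorphisms. -/
theorem stmt10 (k : ℕ) (hk : 2 ≤ k)
    (G : ℕ → Type) [∀ i, Fintype (G i)] [∀ i, AddCommGroup (G i)]
    (S : ∀ i, Finset (Fin k → G i))
    (M : ∀ i, (Fin k → G i) →+ (Fin k → G i))
    (hinv : ∀ i (x : G i), M i (fun _ => x) = 0)
    (hker : ∀ i (x : Fin k → G i), x ∈ S i ↔ M i x = 0)
    (γ : ℝ → ℝ) (hnormal : NormalSeq k G S γ)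
    (p : ℕ → ℝ) (hp : ∀ i, 0 ≤ p i ∧ p i ≤ 1)
    (hp1 : Tendsto (fun i => p i * (Fintype.card (G i) : ℝ)) atTop atTop)
    (hp2 : ∀ U : Finset (Fin k), 2 ≤ U.card →
      Tendsto (fun i => p i * (projCard (S i) U : ℝ) ^ ((1:ℝ)/(U.card:ℝ))) atTop atTop) :
    ∀ ε ε' : ℝ, 0 < ε → 0 < ε' → ∃ n₀ : ℕ, ∀ i, n₀ ≤ Fintype.card (G i) →
      ∀ U : Finset (Fin k), 2 ≤ U.card →
        binomProb (p i) (Finset.univ.filter (fun A : Finset (G i) =>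
          ε * (p i) ^ U.card * (projCard (distinctPart (S i)) U : ℝ) ≤
            |(projCardIn (distinctPart (S i)) U A : ℝ) -
              (p i) ^ U.card * (projCard (distinctPart (S i)) U : ℝ)|)) ≤ ε' := by
  intro ε ε' hε hε'
  obtain ⟨h1, -, -, h4, -, -⟩ := hnormal
  set L : ℝ := 2 ^ k * (k:ℝ) ^ k * 2 / (ε ^ 2 * ε') with hLdef
  have hk0 : (0:ℝ) < k := by exact_mod_cast (by omega : 0 < k)
  have hL : 0 < L := by positivity
  -- large projections
  have hproj : ∀ V : Finset (Fin k), V.Nonempty →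
      ∀ᶠ i in atTop, L ≤ p i ^ V.card * (projCard (S i) V : ℝ) := by
    intro V hV
    by_cases hV2 : 2 ≤ V.card
    · filter_upwards [(hp2 V hV2).eventually_ge_atTop (max L 1)] with i hi
      have hb : (1:ℝ) ≤ p i * (projCard (S i) V : ℝ) ^ ((1:ℝ)/(V.card:ℝ)) :=
        (le_max_right _ _).trans hi
      have h2 := (le_max_left _ _).trans (hi.trans (le_self_pow₀ hb (by omega : V.card ≠ 0)))
      rw [mul_pow, one_div, Real.rpow_inv_natCast_pow (Nat.cast_nonneg _) (by omega)] at h2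
      exact h2
    · have hV1 : V.card = 1 := by have := hV.card_pos; omega
      obtain ⟨a, rfl⟩ := Finset.card_eq_one.1 hV1
      filter_upwards [hp1.eventually_ge_atTop L] with i hi
      refine hi.trans ?_
      rw [hV1, pow_one]
      refine mul_le_mul_of_nonneg_left ?_ (hp i).1
      norm_cast
      unfold projCard
      rw [← Finset.card_univ]
      refine Finset.card_le_card_of_injOn (fun g => fun _ => g) ?_ ?_
      · intro g _
        exact Finset.mem_coe.2 (Finset.mem_image.2 ⟨fun _ => g, (hker i _).2 (hinv i g), rfl⟩)
      · intro g _ g' _ h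
        exact congrFun h ⟨a, by simp⟩
  have hev : ∀ᶠ i in atTop, (∀ V : Finset (Fin k), V.Nonempty →
      L ≤ p i ^ V.card * (projCard (S i) V : ℝ)) ∧ 0 < p i ∧
      (1:ℝ)/2 < ((distinctPart (S i)).card : ℝ) / ((S i).card : ℝ) := by
    refine Filter.Eventually.and ?_ (Filter.Eventually.and ?_ ?_)
    · rw [Filter.eventually_all]
      intro V
      by_cases hV : V.Nonempty
      · filter_upwards [hproj V hV] with i hi _ using hi
      · exact Filter.Eventually.of_forall fun i h => absurd h hV
    · filter_upwards [hp1.eventually_gt_atTop 0] with i hi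
      exact pos_of_mul_pos_left hi (Nat.cast_nonneg _)
    · exact h4.eventually_const_lt (by norm_num)
  obtain ⟨i₀, hi₀⟩ := Filter.eventually_atTop.1 hev
  refine ⟨(∑ i ∈ Finset.range i₀, Fintype.card (G i)) + 1, fun i hi U hU => ?_⟩
  have hii : i₀ ≤ i := by
    by_contra hlt
    have := Finset.single_le_sum (f := fun i => Fintype.card (G i)) (fun _ _ => Nat.zero_le _)
      (Finset.mem_range.2 (not_le.1 hlt))
    omega
  obtain ⟨hV, hp0, hd⟩ := hi₀ i hii
  have hS : ∀ a ∈ S i, ∀ b ∈ S i, ∀ c ∈ S i, a - b + c ∈ S i := by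
    intro a ha b hb c hc
    rw [hker] at *
    simp [ha, hb, hc]
  have hSpos : 0 < (S i).card := Finset.card_pos.2 ⟨0, (hker i 0).2 (map_zero _)⟩
  set H := (S i).image (restr U) with hHdef
  set T := (distinctPart (S i)).image (restr U) with hTdef
  have hdS : distinctPart (S i) ⊆ S i := Finset.filter_subset _ _
  have hTH : T ⊆ H := Finset.image_subset_image hdS
  have hHpos : 0 < H.card := Finset.card_pos.2 ((Finset.card_pos.1 hSpos).image _)
  have hH : ∀ a ∈ H, ∀ b ∈ H, ∀ c ∈ H, a - b + c ∈ H := by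
    intro a ha b hb c hc
    obtain ⟨a, ha1, rfl⟩ := Finset.mem_image.1 ha
    obtain ⟨b, hb1, rfl⟩ := Finset.mem_image.1 hb
    obtain ⟨c, hc1, rfl⟩ := Finset.mem_image.1 hc
    exact Finset.mem_image.2 ⟨_, hS a ha1 b hb1 c hc1, by simp⟩
  have hT : ∀ t ∈ T, Function.Injective t := by
    intro t ht
    obtain ⟨a, ha, rfl⟩ := Finset.mem_image.1 ht
    exact (Finset.mem_filter.1 ha).2.comp Subtype.val_injective
  have hcount : (distinctPart (S i)).card * H.card ≤ T.card * (S i).card := by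
    rw [Finset.card_eq_sum_card_image (restr U) (distinctPart (S i)), Finset.sum_mul,
      ← smul_eq_mul (a := T.card)]
    refine Finset.sum_le_card_nsmul _ _ _ fun b _ => ?_
    refine (Nat.mul_le_mul_right _
      (Finset.card_le_card (Finset.filter_subset_filter _ hdS))).trans ?_
    have := fiber_bound (S i) hS (restr U) b
    convert this using 1
  have hd2 : (S i).card ≤ 2 * (distinctPart (S i)).card := by
    rw [lt_div_iff₀ (by exact_mod_cast hSpos)] at hd
    have : ((S i).card : ℝ) ≤ 2 * (distinctPart (S i)).card := by linarith
    exact_mod_cast this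
  have hHT : H.card ≤ 2 * T.card := by
    refine Nat.le_of_mul_le_mul_right ?_ hSpos
    nlinarith
  have hT0 : T.Nonempty := Finset.card_pos.1 (by omega)
  have hcardU : Fintype.card {a : Fin k // a ∈ U} = U.card := Fintype.card_coe U
  have hWW : ∀ W : Finset {a : Fin k // a ∈ U}, W.Nonempty →
      L ≤ p i ^ W.card * ((H.image (restr W)).card : ℝ) := by
    intro W hW
    rw [hHdef, proj_eq]
    have := hV (W.map (Function.Embedding.subtype _)) (hW.map)
    rwa [Finset.card_map] at this
  have key := cheb H T hH hTH hT hHT hT0 (p i) L ε hp0 (hp i).2 hL hε hWW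
  rw [hcardU] at key
  have hin : ∀ A : Finset (G i), projCardIn (distinctPart (S i)) U A =
      (T.filter (fun t => ∀ j, t j ∈ A)).card := by
    intro A
    unfold projCardIn
    congr 1
    rw [hTdef, Finset.filter_image]
    congr 1
    ext x
    simp [restr]
  have hpc : projCard (distinctPart (S i)) U = T.card := rfl
  simp only [hin, hpc]
  refine key.trans ?_
  have hUk : U.card ≤ k := by simpa using Finset.card_le_univ U
  have hUk' : (U.card : ℝ) ≤ k := by exact_mod_cast hUk
  have hpow : (U.card : ℝ) ^ U.card ≤ (k:ℝ) ^ k :=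
    (pow_le_pow_left₀ (Nat.cast_nonneg _) hUk' _).trans
      (pow_le_pow_right₀ (by exact_mod_cast (by omega : 1 ≤ k)) hUk)
  have hpow2 : (2:ℝ) ^ U.card ≤ 2 ^ k := pow_le_pow_right₀ (by norm_num) hUk
  calc _ ≤ (2 ^ k * (k:ℝ) ^ k * 2 / L) / ε ^ 2 := by gcongr
    _ = ε' := by
      rw [hLdef]
      field_simp
end

section
/- Let k ≥ 2 and let {(S_i,G_i)}_{i≥1} be a sequence of systems of configurations of degree k arising from invariant group homomorphisms on finite abelian groups, and assume |S_i^{(k)}|/|S_i| → 1 as i → ∞. Then there exist ρ > 0 and i₀ such that for every i ≥ i₀ the system (S_i,G_i) is ρ-k-uniform: for every U ⊆ {1,…,k} with |U| ≥ 2 and every x ∈ π_U(S_i^{(k)}), |π_U^{-1}(x) ∩ S_i^{(k)}| ≥ ρ·max over y ∈ π_U(S_i^{(k)}) of |π_U^{-1}(y) ∩ S_i^{(k)}|. -/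
open Finset Filter Topology

attribute [local instance] Classical.propDecidable

theorem coset_avoid (n : ℕ) : ∃ c : ℝ, 0 < c ∧ ∀ (ι V W : Type) [Fintype V] [AddCommGroup V]
    [AddCommGroup W] (φ : ι → V →+ W) (g : ι → W) (T : Finset ι), T.card = n →
    (∀ j ∈ T, g j ≠ 0) → ∀ A : AddSubgroup V,
    c * ((univ.filter (fun z : V => z ∈ A)).card : ℝ) ≤
      ((univ.filter (fun z : V => z ∈ A ∧ ∀ j ∈ T, φ j z ≠ g j)).card : ℝ) := by
  induction n with
  | zero =>
    refine ⟨1, one_pos, ?_⟩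
    intro ι V W _ _ _ φ g T hT hg A
    rw [Finset.card_eq_zero] at hT
    subst hT
    simp
  | succ n ih =>
    obtain ⟨c, hc, ih⟩ := ih
    have hN : (0 : ℝ) < 2 * ((n : ℝ) + 1) := by positivity
    refine ⟨min (1 / 2) (c / (2 * ((n : ℝ) + 1))), by positivity, ?_⟩
    intro ι V W _ _ _ φ g T hT hg A
    by_cases h : ∀ j ∈ T, 2 * ((n : ℝ) + 1) *
        ((univ.filter (fun z : V => z ∈ A ⊓ (φ j).ker)).card : ℝ) ≤
        ((univ.filter (fun z : V => z ∈ A)).card : ℝ)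
    · -- all subgroups have large index
      set a : ℝ := ((univ.filter (fun z : V => z ∈ A)).card : ℝ) with ha
      have hbad : ∀ j ∈ T, ((univ.filter (fun z : V => z ∈ A ∧ φ j z = g j)).card : ℝ) ≤
          a / (2 * ((n : ℝ) + 1)) := by
        intro j hj
        rw [le_div_iff₀ hN]
        refine le_trans ?_ (h j hj)
        rw [mul_comm]
        refine mul_le_mul_of_nonneg_left ?_ hN.le
        norm_cast
        rcases (univ.filter (fun z : V => z ∈ A ∧ φ j z = g j)).eq_empty_or_nonempty with h0 | ⟨w, hw⟩
        · simp [h0]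
        · simp only [mem_filter, mem_univ, true_and] at hw
          refine Finset.card_le_card_of_injOn (fun z => z - w) ?_ ?_
          · intro z hz
            simp only [coe_filter, mem_univ, true_and, Set.mem_ofPred_eq] at hz
            simp only [coe_filter, mem_univ, true_and, Set.mem_ofPred_eq]
            refine ⟨A.sub_mem hz.1 hw.1, ?_⟩
            show φ j (z - w) = 0
            rw [map_sub, hz.2, hw.2, sub_self]
          · intro z _ z' _ hzz
            exact sub_left_injective hzz
      have hcov : univ.filter (fun z : V => z ∈ A) ⊆
          univ.filter (fun z : V => z ∈ A ∧ ∀ j ∈ T, φ j z ≠ g j) ∪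
          T.biUnion (fun j => univ.filter (fun z : V => z ∈ A ∧ φ j z = g j)) := by
        intro z hz
        simp only [mem_filter, mem_univ, true_and, mem_union, mem_biUnion] at hz ⊢
        by_cases hh : ∀ j ∈ T, φ j z ≠ g j
        · exact Or.inl ⟨hz, hh⟩
        · push Not at hh
          obtain ⟨j, hj, hjz⟩ := hh
          exact Or.inr ⟨j, hj, hz, hjz⟩
      have h1 := (Finset.card_le_card hcov).trans (Finset.card_union_le _ _)
      have h2 := h1.trans (Nat.add_le_add_left Finset.card_biUnion_le _)
      have h3 : a ≤ ((univ.filter (fun z : V => z ∈ A ∧ ∀ j ∈ T, φ j z ≠ g j)).card : ℝ) +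
          ∑ j ∈ T, ((univ.filter (fun z : V => z ∈ A ∧ φ j z = g j)).card : ℝ) := by
        rw [ha]; exact_mod_cast h2
      have h4 := Finset.sum_le_sum hbad
      rw [Finset.sum_const, hT, nsmul_eq_mul] at h4
      have h5 : ((n + 1 : ℕ) : ℝ) * (a / (2 * ((n : ℝ) + 1))) = a / 2 := by
        push_cast; field_simp
      have ha0 : 0 ≤ a := by positivity
      have h6 : min (1 / 2) (c / (2 * ((n : ℝ) + 1))) * a ≤ 1 / 2 * a :=
        mul_le_mul_of_nonneg_right (min_le_left _ _) ha0
      linarith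
    · push Not at h
      obtain ⟨j, hj, hlt⟩ := h
      have h1 := ih ι V W φ g (T.erase j) (by rw [Finset.card_erase_of_mem hj, hT]; rfl)
        (fun i hi => hg i (Finset.mem_of_mem_erase hi)) (A ⊓ (φ j).ker)
      have h2 : (univ.filter (fun z : V => z ∈ A ⊓ (φ j).ker ∧ ∀ i ∈ T.erase j, φ i z ≠ g i)).card ≤
          (univ.filter (fun z : V => z ∈ A ∧ ∀ j ∈ T, φ j z ≠ g j)).card := by
        refine Finset.card_le_card ?_
        intro z hz
        simp only [mem_filter, mem_univ, true_and] at hz ⊢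
        refine ⟨hz.1.1, fun i hi => ?_⟩
        by_cases hij : i = j
        · subst hij
          have : φ i z = 0 := hz.1.2
          rw [this]
          exact (hg i hi).symm
        · exact hz.2 i (Finset.mem_erase.2 ⟨hij, hi⟩)
      have h2' : ((univ.filter (fun z : V => z ∈ A ⊓ (φ j).ker ∧ ∀ i ∈ T.erase j, φ i z ≠ g i)).card : ℝ) ≤
          ((univ.filter (fun z : V => z ∈ A ∧ ∀ j ∈ T, φ j z ≠ g j)).card : ℝ) := by
        exact_mod_cast h2
      refine le_trans ?_ (h1.trans h2')
      refine (mul_le_mul_of_nonneg_right (min_le_right _ _) (by positivity)).trans ?_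
      rw [div_mul_eq_mul_div, div_le_iff₀ hN, mul_assoc]
      refine mul_le_mul_of_nonneg_left ?_ hc.le
      linarith

/-- uniformity of sequences of invariant homomorphism systems with
`|S_i^{(k)}|/|S_i| → 1`. -/
theorem stmt11 (k : ℕ) (hk : 2 ≤ k)
    (G : ℕ → Type) [∀ i, Fintype (G i)] [∀ i, AddCommGroup (G i)]
    (S : ∀ i, Finset (Fin k → G i))
    (M : ∀ i, (Fin k → G i) →+ (Fin k → G i))
    (hinv : ∀ i (x : G i), M i (fun _ => x) = 0)
    (hker : ∀ i (x : Fin k → G i), x ∈ S i ↔ M i x = 0)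
    (hratio : Tendsto
      (fun i => ((distinctPart (S i)).card : ℝ) / ((S i).card : ℝ)) atTop (nhds 1)) :
    ∃ ρ : ℝ, 0 < ρ ∧ ∃ i₀ : ℕ, ∀ i, i₀ ≤ i → RhoUniform ρ (S i) := by
  set T : Finset (Fin k × Fin k) := univ.filter (fun p => p.1 ≠ p.2) with hTdef
  obtain ⟨c, hc, H⟩ := coset_avoid T.card
  refine ⟨c, hc, 0, fun i _ U _ x hx y hy => ?_⟩
  simp only [distinctPart, mem_filter] at hx hy
  let A : AddSubgroup (Fin k → G i) :=
    { carrier := {z | M i z = 0 ∧ ∀ j ∈ U, z j = 0}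
      zero_mem' := ⟨map_zero _, fun _ _ => rfl⟩
      add_mem' := by
        rintro a b ⟨ha, ha'⟩ ⟨hb, hb'⟩
        refine ⟨by rw [map_add, ha, hb, add_zero], fun j hj => ?_⟩
        rw [Pi.add_apply, ha' j hj, hb' j hj, add_zero]
      neg_mem' := by
        rintro a ⟨ha, ha'⟩
        refine ⟨by rw [map_neg, ha, neg_zero], fun j hj => ?_⟩
        rw [Pi.neg_apply, ha' j hj, neg_zero] }
  have hA : ∀ z, z ∈ A ↔ (M i z = 0 ∧ ∀ j ∈ U, z j = 0) := fun z => Iff.rfl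
  let φ : Fin k × Fin k → (Fin k → G i) →+ G i := fun p =>
    Pi.evalAddMonoidHom (fun _ => G i) p.1 - Pi.evalAddMonoidHom (fun _ => G i) p.2
  have hφ : ∀ p z, φ p z = z p.1 - z p.2 := fun p z => rfl
  have key := H (Fin k × Fin k) (Fin k → G i) (G i) φ (fun p => x p.2 - x p.1) T rfl
    (by
      intro p hp h0
      rw [hTdef, mem_filter] at hp
      exact hp.2 (hx.2 (sub_eq_zero.1 h0)).symm) A
  have up : ((distinctPart (S i)).filter (fun z => ∀ j ∈ U, z j = y j)).card ≤
      (univ.filter (fun z : Fin k → G i => z ∈ A)).card := by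
    refine Finset.card_le_card_of_injOn (fun z => z - y) ?_ ?_
    · intro z hz
      simp only [distinctPart, mem_coe, mem_filter] at hz
      simp only [mem_coe, mem_filter, mem_univ, true_and, hA]
      refine ⟨?_, fun j hj => ?_⟩
      · rw [map_sub, (hker i z).1 hz.1.1, (hker i y).1 hy.1, sub_zero]
      · rw [Pi.sub_apply, hz.2 j hj, sub_self]
    · intro z _ z' _ hzz
      exact sub_left_injective hzz
  have low : (univ.filter (fun z : Fin k → G i =>
        z ∈ A ∧ ∀ p ∈ T, φ p z ≠ x p.2 - x p.1)).card ≤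
      ((distinctPart (S i)).filter (fun z => ∀ j ∈ U, z j = x j)).card := by
    refine Finset.card_le_card_of_injOn (fun z => z + x) ?_ ?_
    · intro z hz
      simp only [mem_coe, mem_filter, mem_univ, true_and, hA] at hz
      simp only [distinctPart, mem_coe, mem_filter]
      refine ⟨⟨?_, ?_⟩, fun j hj => ?_⟩
      · rw [hker, map_add, hz.1.1, (hker i x).1 hx.1, zero_add]
      · intro a b hab
        by_contra hne
        refine hz.2 (a, b) (by rw [hTdef, mem_filter]; exact ⟨mem_univ _, hne⟩) ?_
        rw [hφ]
        simp only [Pi.add_apply] at hab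
        rw [sub_eq_sub_iff_add_eq_add, hab, add_comm]
      · rw [Pi.add_apply, hz.1.2 j hj, zero_add]
    · intro z _ z' _ hzz
      exact add_left_injective x hzz
  have up' : (((distinctPart (S i)).filter (fun z => ∀ j ∈ U, z j = y j)).card : ℝ) ≤
      ((univ.filter (fun z : Fin k → G i => z ∈ A)).card : ℝ) := by exact_mod_cast up
  have low' : ((univ.filter (fun z : Fin k → G i =>
        z ∈ A ∧ ∀ p ∈ T, φ p z ≠ x p.2 - x p.1)).card : ℝ) ≤
      (((distinctPart (S i)).filter (fun z => ∀ j ∈ U, z j = x j)).card : ℝ) := by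
    exact_mod_cast low
  refine (mul_le_mul_of_nonneg_left up' hc.le).trans (le_trans ?_ low')
  refine (le_of_eq_of_le ?_ key).trans (le_of_eq ?_)
  · congr!
  · congr!
end

section
/- Let m, k ≥ 1 be integers and let M : (ℤ^m)^k → (ℤ^m)^k be a group homomorphism with M(x,…,x) = 0 for all x ∈ ℤ^m. For n ≥ 1 let S_n = M^{-1}(0) ∩ ([1,n]^m)^k, and for a positive integer N let S̄_N ⊆ ((ℤ/Nℤ)^m)^k denote the kernel of the homomorphism induced by M on ((ℤ/Nℤ)^m)^k by reduction modulo N. Then there exist a positive integer λ and a constant c > 0, both depending only on M, such that for every n ≥ 1 and every i ∈ {1,…,k}: α_i(S_n, [1,n]^m) ≤ α_i(S̄_{λn}, (ℤ/λnℤ)^m) ≤ c·α_i(S_n, [1,n]^m). -/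
open Finset

attribute [local instance] Classical.propDecidable

/-- The `i`-th degree of freedom `α_i(S)`: the maximum, over sets `U` of `i` coordinates and
over tuples of prescribed values attained on these coordinates, of the number of tuples of `S`
agreeing with the prescribed values on `U`.  (For `i ≥ 1` the maximum over all prescribed
values is attained on values coming from tuples of `S`.) -/
noncomputable def alphaOf {k : ℕ} {G : Type} (S : Finset (Fin k → G)) (i : ℕ) : ℕ :=
  (Finset.univ.filter fun U : Finset (Fin k) => U.card = i).sup fun U =>
    S.sup fun x => (S.filter fun y => ∀ j ∈ U, y j = x j).card

theorem aux_bound {m k : ℕ} (M : (Fin k → Fin m → ℤ) →+ (Fin k → Fin m → ℤ)) :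
    ∃ C : ℤ, 0 ≤ C ∧ ∀ (n : ℤ) (x : Fin k → Fin m → ℤ), (∀ j r, |x j r| ≤ n) →
      ∀ j r, |M x j r| ≤ C * n := by
  refine ⟨∑ j', ∑ r', ∑ j, ∑ r, |M (Pi.single j (Pi.single r 1)) j' r'|,
    Finset.sum_nonneg fun _ _ => Finset.sum_nonneg fun _ _ => Finset.sum_nonneg fun _ _ =>
      Finset.sum_nonneg fun _ _ => abs_nonneg _, ?_⟩
  intro n x hx j' r'
  have hn : 0 ≤ n := (abs_nonneg _).trans (hx j' r')
  have e : x = ∑ j, ∑ r, x j r • (Pi.single j (Pi.single r 1) : Fin k → Fin m → ℤ) := by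
    ext a b
    simp only [Finset.sum_apply, Pi.smul_apply, smul_eq_mul]
    rw [Finset.sum_eq_single a, Finset.sum_eq_single b]
    · simp
    · intro r _ h
      simp [Pi.single_apply, h.symm]
    · simp
    · intro j _ h
      refine Finset.sum_eq_zero fun r _ => ?_
      simp [Pi.single_apply, h.symm]
    · simp
  have e2 : M x j' r' = ∑ j, ∑ r, x j r * M (Pi.single j (Pi.single r 1)) j' r' := by
    conv_lhs => rw [e]
    simp only [map_sum, map_zsmul, Finset.sum_apply, Pi.smul_apply, smul_eq_mul]
  have h1 : |M x j' r'| ≤ (∑ j, ∑ r, |M (Pi.single j (Pi.single r 1)) j' r'|) * n := by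
    rw [e2, Finset.sum_mul]
    refine (Finset.abs_sum_le_sum_abs _ _).trans (Finset.sum_le_sum fun j _ => ?_)
    rw [Finset.sum_mul]
    refine (Finset.abs_sum_le_sum_abs _ _).trans (Finset.sum_le_sum fun r _ => ?_)
    rw [abs_mul, mul_comm]
    exact mul_le_mul_of_nonneg_left (hx j r) (abs_nonneg _)
  refine h1.trans (mul_le_mul_of_nonneg_right ?_ hn)
  refine le_trans ?_ (Finset.single_le_sum (f := fun j' => ∑ r', ∑ j, ∑ r,
    |M (Pi.single j (Pi.single r 1)) j' r'|) (fun _ _ => Finset.sum_nonneg fun _ _ =>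
      Finset.sum_nonneg fun _ _ => Finset.sum_nonneg fun _ _ => abs_nonneg _) (Finset.mem_univ j'))
  exact Finset.single_le_sum (f := fun r' => ∑ j, ∑ r,
    |M (Pi.single j (Pi.single r 1)) j' r'|) (fun _ _ => 
      Finset.sum_nonneg fun _ _ => Finset.sum_nonneg fun _ _ => abs_nonneg _) (Finset.mem_univ r')

theorem aux_le_alpha {k : ℕ} {G : Type} (S : Finset (Fin k → G)) (U : Finset (Fin k))
    (x : Fin k → G) (hx : x ∈ S) :
    (S.filter fun y => ∀ j ∈ U, y j = x j).card ≤ alphaOf S U.card := by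
  unfold alphaOf
  refine Finset.le_sup_of_le (b := U) (by simp) ?_
  exact Finset.le_sup_of_le hx le_rfl

theorem aux_alpha_le {k : ℕ} {G : Type} (S : Finset (Fin k → G)) (i B : ℕ)
    (h : ∀ U : Finset (Fin k), U.card = i → ∀ x ∈ S,
      (S.filter fun y => ∀ j ∈ U, y j = x j).card ≤ B) : alphaOf S i ≤ B := by
  unfold alphaOf
  refine Finset.sup_le fun U hU => Finset.sup_le fun x hx => h U (by simpa using hU) x hx

/-- comparison of the degrees of freedom of an invariant system on the cube
`[1,n]^m` with those of its reduction modulo `λn`. -/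
theorem stmt13 (m k : ℕ) (hm : 1 ≤ m) (hk : 1 ≤ k)
    (M : (Fin k → Fin m → ℤ) →+ (Fin k → Fin m → ℤ))
    (hinv : ∀ x : Fin m → ℤ, M (fun _ => x) = 0) :
    ∃ (lam : ℕ) (c : ℝ), 0 < lam ∧ 0 < c ∧
      ∀ n : ℕ, 1 ≤ n →
      ∀ Sn : Finset (Fin k → Fin m → ℤ),
        (∀ x, x ∈ Sn ↔ (M x = 0 ∧ ∀ j r, x j r ∈ Finset.Icc (1:ℤ) (n:ℤ))) →
      ∀ Sbar : Finset (Fin k → Fin m → ZMod (lam * n)),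
        (∀ y, y ∈ Sbar ↔ ∃ x : Fin k → Fin m → ℤ,
          (∀ j r, ((x j r : ℤ) : ZMod (lam * n)) = y j r) ∧
          (∀ j r, ((M x j r : ℤ) : ZMod (lam * n)) = 0)) →
      ∀ i : ℕ, 1 ≤ i → i ≤ k →
        alphaOf Sn i ≤ alphaOf Sbar i ∧
        (alphaOf Sbar i : ℝ) ≤ c * (alphaOf Sn i : ℝ) := by
  obtain ⟨C, hC0, hC⟩ := aux_bound M
  let T : Finset ((Fin k → Fin m → ℤ) × (Fin k → Fin m → Bool)) :=
    (Fintype.piFinset fun _ => Fintype.piFinset fun _ => Finset.Icc (-C) C) ×ˢ Finset.univ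
  refine ⟨1, (T.card : ℝ) + 1, one_pos, by positivity, ?_⟩
  intro n hn Sn hSn Sbar hSbar i hi hik
  constructor
  · refine aux_alpha_le _ _ _ fun U hU x hx => ?_
    subst hU
    let φ : (Fin k → Fin m → ℤ) → (Fin k → Fin m → ZMod (1 * n)) := fun x j r => (x j r : ZMod (1 * n))
    have hφ : ∀ x ∈ Sn, φ x ∈ Sbar := by
      intro x hx
      rw [hSbar]
      refine ⟨x, fun j r => rfl, fun j r => ?_⟩
      rw [((hSn x).1 hx).1]
      simp
    refine le_trans ?_ (aux_le_alpha Sbar U (φ x) (hφ x hx))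
    refine Finset.card_le_card_of_injOn φ ?_ ?_
    · intro y hy
      simp only [Finset.coe_filter, Set.mem_ofPred_eq] at hy ⊢
      refine ⟨hφ y hy.1, fun j hj => ?_⟩
      funext r
      simp only [φ, hy.2 j hj]
    · intro y hy z hz hyz
      simp only [Finset.coe_filter, Set.mem_ofPred_eq] at hy hz
      have hy1 := ((hSn y).1 hy.1).2
      have hz1 := ((hSn z).1 hz.1).2
      funext j r
      have h := congrFun (congrFun hyz j) r
      simp only [φ] at h
      rw [ZMod.intCast_eq_intCast_iff_dvd_sub] at h
      have a := Finset.mem_Icc.1 (hy1 j r)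
      have b := Finset.mem_Icc.1 (hz1 j r)
      have : z j r - y j r = 0 := by
        refine Int.eq_zero_of_abs_lt_dvd h ?_
        rw [abs_lt]
        push_cast
        constructor <;> linarith
      linarith
  · have key : alphaOf Sbar i ≤ alphaOf Sn i * T.card := by
      refine aux_alpha_le _ _ _ fun U hU y0 hy0 => ?_
      subst hU
      have hN : NeZero (1 * n) := ⟨by omega⟩
      have hn0 : (0:ℤ) < n := by exact_mod_cast hn
      let L : (Fin k → Fin m → ZMod (1 * n)) → (Fin k → Fin m → ℤ) := fun y j r => ((y j r).val : ℤ)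
      have hL : ∀ y j r, ((L y j r : ℤ) : ZMod (1 * n)) = y j r := by
        intro y j r
        simp [L]
      have hLb : ∀ y j r, 0 ≤ L y j r ∧ L y j r < n := by
        intro y j r
        refine ⟨Int.natCast_nonneg _, ?_⟩
        have := ZMod.val_lt (y j r)
        simp only [L]
        omega
      have hdvd : ∀ y ∈ Sbar, ∀ j r, (n : ℤ) ∣ M (L y) j r := by
        intro y hy j r
        obtain ⟨x, hx1, hx2⟩ := (hSbar y).1 hy
        have h1 : ∀ j r, ∃ t, L y j r - x j r = n * t := by
          intro j r
          have : ((x j r : ℤ) : ZMod (1 * n)) = (L y j r : ℤ) := by rw [hL, hx1]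
          rw [ZMod.intCast_eq_intCast_iff_dvd_sub] at this
          rw [one_mul] at this
          exact this
        choose t ht using h1
        have e : L y = x + (n : ℤ) • t := by
          funext j r
          simp only [Pi.add_apply, Pi.smul_apply, smul_eq_mul]
          linarith [ht j r]
        have h2 := (ZMod.intCast_zmod_eq_zero_iff_dvd _ _).1 (hx2 j r)
        rw [one_mul] at h2
        rw [e, map_add, map_zsmul]
        simp only [Pi.add_apply, Pi.smul_apply, smul_eq_mul]
        exact dvd_add h2 (dvd_mul_right _ _)
      obtain ⟨h, hh1, hh2, hh3⟩ : ∃ h : ℤ, 1 ≤ h ∧ 2 * h - 1 ≤ n ∧ n ≤ 2 * h :=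
        ⟨((n : ℤ) + 1) / 2, by omega, by omega, by omega⟩
      let f : (Fin k → Fin m → ZMod (1 * n)) → (Fin k → Fin m → ℤ) × (Fin k → Fin m → Bool) :=
        fun y => (fun j r => M (L y) j r / n, fun j r => decide (L y j r < h))
      refine Finset.card_le_mul_card_image_of_maps_to (f := f) (t := T) ?_ _ ?_
      · intro y hy
        simp only [T, f, Finset.mem_product, Fintype.mem_piFinset, Finset.mem_univ, and_true,
          Finset.mem_Icc]
        intro j r
        have := abs_le.1 (hC n (L y) (fun j r => by
          rw [abs_of_nonneg (hLb y j r).1]; exact (hLb y j r).2.le) j r)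
        constructor
        · rw [Int.le_ediv_iff_mul_le hn0]; linarith
        · exact Int.ediv_le_of_le_mul hn0 this.2
      · intro b hb
        rcases Finset.eq_empty_or_nonempty (Finset.filter (fun a => f a = b)
          (Sbar.filter fun y => ∀ j ∈ U, y j = y0 j)) with hne | ⟨z, hz⟩
        · refine le_trans (le_of_eq ?_) (Nat.zero_le _)
          rw [Finset.card_eq_zero, ← hne]
          ext; simp
        simp only [Finset.mem_filter] at hz
        have hconst : (fun _ _ => h : Fin k → Fin m → ℤ) ∈ Sn := by
          rw [hSn]
          refine ⟨hinv _, fun j r => ?_⟩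
          rw [Finset.mem_Icc]
          constructor <;> linarith
        refine le_trans ?_ (aux_le_alpha Sn U _ hconst)
        refine Finset.card_le_card_of_injOn (fun y => L y - L z + (fun _ _ => h)) ?_ ?_
        · intro y hy
          simp only [Finset.coe_filter, Finset.mem_filter, Set.mem_ofPred_eq] at hy ⊢
          have hf : f y = f z := hy.2.trans hz.2.symm
          refine ⟨(hSn _).2 ⟨?_, fun j r => ?_⟩, fun j hj => ?_⟩
          · rw [map_add, map_sub, hinv (fun _ => h), add_zero, sub_eq_zero]
            funext j r
            have h1 := congrFun (congrFun (congrArg Prod.fst hf) j) r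
            simp only [f] at h1
            rw [← Int.ediv_mul_cancel (hdvd y hy.1.1 j r), h1,
              Int.ediv_mul_cancel (hdvd z hz.1.1 j r)]
          · have h1 := congrFun (congrFun (congrArg Prod.snd hf) j) r
            simp only [f, decide_eq_decide] at h1
            have a := hLb y j r
            have b := hLb z j r
            simp only [Pi.add_apply, Pi.sub_apply, Finset.mem_Icc]
            omega
          · funext r
            have : y j = z j := (hy.1.2 j hj).trans (hz.1.2 j hj).symm
            simp [L, this]
        · intro y _ y' _ hyy
          have : L y = L y' := by simpa using hyy
          funext j r
          rw [← hL y j r, this, hL]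
    have : (alphaOf Sbar i : ℝ) ≤ alphaOf Sn i * T.card := by exact_mod_cast key
    have h0 : (0:ℝ) ≤ alphaOf Sn i := by positivity
    linarith
end
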